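/- arXiv:2506.09651 — 3 statements merged into one kernel-verified Lean document; each statement's English description precedes it below -/
import Mathlib

section
/- Let m be an odd prime and let h be an integer with 3 ≤ h ≤ m−1 such that either (I) m ≥ 5 and 2h ≡ 3 (mod m), or (II) m ≡ 2 (mod 3) and h = (m+1)/3. Set e = 3^h + 13. Then the equation (x+1)^e + x^e + 1 = 0 has the unique solution x = 1 in the finite field F_{3^m}; that is, for every x in F_{3^m}, (x+1)^e + x^e + 1 = 0 if and only if x = 1. -/
lemma aux_T {K : Type*} [Field K] (h3 : (3:K) = 0) (s : K)
    (hQ : -1 + s + s^2 + s^3 + s^4 + s^5 - s^6 + s^7 - s^8 + s^13 - s^14 - s^16 + s^17 + s^20 + s^22 + s^23 - s^26 - s^27 + s^28 = 0) :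
    ∃ t : K, t ^ 2 = -1 := by
  refine ⟨s + s^2 + s^3 - s^6 - s^8 + s^11 - s^14 - s^15 + s^16 + s^17 + s^18 - s^20 - s^21 - s^23 - s^24, ?_⟩
  linear_combination (-1 - s - s^3 + s^5 - s^6 + s^7 - s^8 + s^10 - s^11 - s^12 + s^13 - s^14 + s^16 + s^17 - s^18 + s^20) * hQ
    + (s^2 + s^3 + 2*s^4 + 2*s^5 - s^8 - 2*s^9 - s^11 + 3*s^13 - 2*s^17 + 2*s^19 + s^20 + 2*s^21 - 2*s^22 - 3*s^24 - 2*s^25 - 2*s^26 - s^27 + 2*s^28 + 3*s^29 - s^30 + s^31 - s^32 - s^33 + 2*s^34 + s^35 + s^36 - s^37 - s^38 - s^39 - s^40 - s^41 + s^43 + s^44 + s^46 + s^47) * h3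

lemma aux_fac2 {K : Type*} [Field K] (h3 : (3:K) = 0) (s N A : K)
    (hN : N = 1 - s - s^2 - s^3)
    (hA : A = s^9 - N^2*s^6 - N^4*s^3 - N^6)
    (hF : A * (A + (2*s-1)*s^4*N^3 - (s^3 - N^2)*N^2*s^3) = s^9 * N^6) :
    (s + 1) * (s^2 + s - 1) * ((1 + s + s^2 + s^3 - s^4 + s^5) *
      (-1 + s + s^2 + s^3 + s^4 + s^5 - s^6 + s^7 - s^8 + s^13 - s^14 - s^16 + s^17 + s^20 + s^22 + s^23 - s^26 - s^27 + s^28)) = 0 := by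
  subst hA
  subst hN
  linear_combination hF + (4*s - 19*s^2 + 32*s^3 - 9*s^4 - 7*s^5 - 146*s^6 + 216*s^7 + 211*s^8 - 19*s^9 - 949*s^10 - 233*s^11 + 1161*s^12 + 2030*s^13 - 527*s^14 - 3304*s^15 - 3067*s^16 + 1727*s^17 + 5574*s^18 + 4277*s^19 - 1794*s^20 - 6468*s^21 - 5684*s^22 - 430*s^23 + 4395*s^24 + 5485*s^25 + 3106*s^26 - 116*s^27 - 2093*s^28 - 2380*s^29 - 1709*s^30 - 905*s^31 - 366*s^32 - 113*s^33 - 27*s^34 - 4*s^35) * h3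

lemma aux_fac1 {K : Type*} [Field K] (h3 : (3:K) = 0) (s N : K)
    (hN : N = 1 - s - s^2 - s^3)
    (hF : N * (1 + s + s^2 + s^6) = s^3) :
    (s - 1)^4 * (-1 - s - s^4 + s^5) = 0 := by
  subst hN
  linear_combination (-1) * hF + (s - s^2 - 2*s^3 + s^5 - 3*s^6 + 3*s^7 - 2*s^8) * h3

lemma aux_cub1 {K : Type*} [Field K] (h3 : (3:K) = 0) (s : K)
    (hq : -1 - s - s^4 + s^5 = 0) : s ^ 243 = s := by
  have e9 : s ^ 9 = -1 - s^2 - s^3 + s^4 := by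
    have : s ^ 9 = (s ^ 3) ^ 3 := by ring
    rw [this]
    linear_combination (-1 + s + s^2 + s^3 + s^4) * hq + (s^2 + s^3 + s^5) * h3
  have e27 : s ^ 27 = 1 + s^2 + s^3 := by
    have : s ^ 27 = (s ^ 9) ^ 3 := by ring
    rw [this, e9]
    linear_combination (-1 + s + s^3 + s^5 + s^6 + s^7) * hq + (-1 - s^2 - s^3 - s^5 + s^6 + 2*s^7 - s^8 + 2*s^9 - s^11) * h3
  have e81 : s ^ 81 = 1 - s - s^3 - s^4 := by
    have : s ^ 81 = (s ^ 27) ^ 3 := by ring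
    rw [this, e27]
    linear_combination (-s + s^2 + s^3 + s^4) * hq + (s^2 + 2*s^3 + 2*s^4 + 2*s^5 + 2*s^6 + s^7 + s^8) * h3
  have e243 : s ^ 243 = s := by
    have : s ^ 243 = (s ^ 81) ^ 3 := by ring
    rw [this, e81]
    linear_combination (-1 - s + s^2 + s^4 - s^5 - s^6 - s^7) * hq + (-2*s + s^2 - s^3 + s^4 + s^5 - s^8 - 2*s^9 - s^10 - s^11) * h3
  exact e243

lemma aux_cub2 {K : Type*} [Field K] (h3 : (3:K) = 0) (s : K)
    (hq : 1 + s + s^2 + s^3 - s^4 + s^5 = 0) : s ^ 243 = s := by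
  have e9 : s ^ 9 = 1 - s^3 - s^4 := by
    have : s ^ 9 = (s ^ 3) ^ 3 := by ring
    rw [this]
    linear_combination (-1 + s + s^3 + s^4) * hq + (-s^4 - s^6) * h3
  have e27 : s ^ 27 = -1 - s^2 - s^3 - s^4 := by
    have : s ^ 27 = (s ^ 9) ^ 3 := by ring
    rw [this, e9]
    linear_combination (-1 + s + s^2 + s^4 - s^6 - s^7) * hq + (1 - s^3 - 2*s^4 + s^6 + 2*s^7 + 2*s^8 - s^10 - s^11) * h3
  have e81 : s ^ 81 = 1 - s + s^2 + s^3 - s^4 := by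
    have : s ^ 81 = (s ^ 27) ^ 3 := by ring
    rw [this, e27]
    linear_combination (1 + s^2 + s^4 - s^6 - s^7) * hq + (-1 - 2*s^2 - 2*s^3 - 2*s^4 - 3*s^5 - 3*s^6 - 3*s^7 - 2*s^8 - 2*s^9 - 2*s^10 - s^11) * h3
  have e243 : s ^ 243 = s := by
    have : s ^ 243 = (s ^ 81) ^ 3 := by ring
    rw [this, e81]
    linear_combination (1 + s + s^2 - s^3 - s^6 - s^7) * hq + (-2*s + s^2 - 2*s^3 - s^4 + 4*s^5 - 3*s^6 + 4*s^8 - 2*s^9 + s^11) * h3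
  exact e243

lemma aux_trace {K : Type*} [Field K] (h3 : (3:K) = 0) (w : K)
    (hq : 1 + w + w^2 + w^4 + w^5 = 0) : w + w^3 + w^9 + w^27 + w^81 = -1 := by
  have e9 : w ^ 9 = 1 - w^2 - w^3 := by
    have : w ^ 9 = (w ^ 3) ^ 3 := by ring
    rw [this]
    linear_combination (-1 + w + w^2 - w^3 + w^4) * hq + (-w^6) * h3
  have e27 : w ^ 27 = -1 + w^2 - w^3 - w^4 := by
    have : w ^ 27 = (w ^ 9) ^ 3 := by ring
    rw [this, e9]
    linear_combination (-1 + w - w^2 + w^3 - w^4) * hq + (1 - w^2 - w^3 + 2*w^4 + 2*w^5 + w^6 - w^7 - w^8) * h3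
  have e81 : w ^ 81 = -1 - w + w^3 + w^4 := by
    have : w ^ 81 = (w ^ 27) ^ 3 := by ring
    rw [this, e27]
    linear_combination (w - w^2 - w^3 + w^4 - w^5 + w^6 - w^7) * hq + (w^2 - w^3 - 2*w^4 + 2*w^5 + w^6 - 2*w^7 - w^8 + 2*w^9 - w^11) * h3
  rw [e9, e27, e81]
  linear_combination (0) * h3

lemma aux_noi {K : Type*} [Field K] (h3 : (3:K) = 0) (m : ℕ) (hodd : Odd m)
    (hfix : ∀ x : K, x ^ (3 ^ m) = x) (t : K) (ht : t ^ 2 = -1) : False := by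
  have key : ∀ k : ℕ, t ^ (3 ^ (2 * k + 1)) = -t := by
    intro k
    induction k with
    | zero => simp; linear_combination t * ht
    | succ k ih =>
      have : t ^ (3 ^ (2 * (k+1) + 1)) = (t ^ (3 ^ (2 * k + 1))) ^ 9 := by
        rw [← pow_mul]; congr 1; ring
      rw [this, ih]
      have h8 : t ^ 8 = 1 := by
        have : t ^ 8 = (t^2)^4 := by ring
        rw [this, ht]; ring
      linear_combination (-t) * h8
  obtain ⟨k, rfl⟩ := hodd
  have h1 := key k
  rw [hfix] at h1
  have h2 : t = 0 := by linear_combination t * h3 - h1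
  rw [h2] at ht
  have : (1:K) = 0 := by linear_combination ht
  exact one_ne_zero this

lemma aux_cop {K : Type*} [Field K] (m : ℕ) (hc : Nat.Coprime m 5)
    (hfix : ∀ x : K, x ^ (3 ^ m) = x) (s : K) (hs : s ^ 243 = s) : s ^ 3 = s := by
  have h1 : Function.IsPeriodicPt (fun x : K => x ^ 3) m s := by
    unfold Function.IsPeriodicPt Function.IsFixedPt
    rw [pow_iterate]; exact hfix s
  have h2 : Function.IsPeriodicPt (fun x : K => x ^ 3) 5 s := by
    unfold Function.IsPeriodicPt Function.IsFixedPt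
    rw [pow_iterate]; simpa using hs
  have h := h1.gcd h2
  rw [hc] at h
  simpa [Function.IsPeriodicPt, Function.IsFixedPt] using h

lemma aux_cases {K : Type*} [Field K] (s : K) (hs : s ^ 3 = s) : s = 0 ∨ s = 1 ∨ s = -1 := by
  have : s * ((s - 1) * (s + 1)) = 0 := by linear_combination hs
  rcases mul_eq_zero.1 this with h | h
  · exact Or.inl h
  · rcases mul_eq_zero.1 h with h | h
    · exact Or.inr (Or.inl (sub_eq_zero.1 h))
    · exact Or.inr (Or.inr (eq_neg_of_add_eq_zero_left h))

lemma aux_mod {K : Type*} [Field K] (m : ℕ) (hfix : ∀ x : K, x ^ (3 ^ m) = x) (a k : ℕ) (x : K) :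
    x ^ (3 ^ (a + m * k)) = x ^ (3 ^ a) := by
  induction k with
  | zero => simp
  | succ k ih =>
    have : x ^ (3 ^ (a + m * (k+1))) = (x ^ (3 ^ (a + m * k))) ^ (3 ^ m) := by
      rw [← pow_mul, ← pow_add]; congr 2; ring
    rw [this, hfix, ih]

/-- The Artin-Schreier variable is not `± 1`. -/
lemma aux_tr {K : Type*} [Field K] [CharP K 3] (m : ℕ) (hm3 : ¬ 3 ∣ m)
    (hfix : ∀ x : K, x ^ (3 ^ m) = x) (z : K) (hw : (z ^ 3 - z) ^ 2 = 1) : False := by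
  set c := z ^ 3 - z with hc
  have hz : z ^ 3 = z + c := by rw [hc]; ring
  have hc3 : c ^ 3 = c := by linear_combination c * hw
  have key : ∀ k : ℕ, z ^ (3 ^ k) = z + k * c := by
    intro k
    induction k with
    | zero => simp
    | succ k ih =>
      rw [pow_succ, pow_mul, ih, add_pow_char, mul_pow, hc3, hz]
      have : (k : K) ^ 3 = k := by
        have := map_natCast (frobenius K 3) k
        rwa [frobenius_def] at this
      rw [this]; push_cast; ring
  have h1 := key m
  rw [hfix] at h1
  have h2 : (m : K) * c = 0 := by linear_combination -h1
  rcases mul_eq_zero.1 h2 with h | h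
  · exact hm3 ((CharP.cast_eq_zero_iff K 3 m).1 h)
  · rw [h] at hw; simp at hw

/-- Reduction of the equation to the Artin-Schreier form. -/
lemma aux_red {K : Type*} [Field K] [CharP K 3] (m h : ℕ) (hm3 : ¬ 3 ∣ m)
    (hfix : ∀ x : K, x ^ (3 ^ m) = x) (x : K) (hx : x ≠ 1)
    (he : (x + 1) ^ (3 ^ h + 13) + x ^ (3 ^ h + 13) + 1 = 0) :
    ∃ z : K, z ^ 3 - z ≠ 0 ∧ (z ^ 3 - z) ^ 2 ≠ 1 ∧
      (z ^ (3 ^ h) - z) * (z ^ 3 - z) = 1 - (z ^ 3 - z) ^ 2 := by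
  have h3 : (3:K) = 0 := by exact_mod_cast CharP.cast_eq_zero K 3
  have hx1 : x - 1 ≠ 0 := sub_ne_zero.2 hx
  obtain ⟨z, hz⟩ : ∃ z : K, z = (x - 1)⁻¹ := ⟨_, rfl⟩
  have hz0 : z ≠ 0 := by rw [hz]; exact inv_ne_zero hx1
  have hxz : x * z = z + 1 := by rw [hz]; field_simp; ring
  obtain ⟨Z, hZ⟩ : ∃ Z : K, Z = z ^ (3 ^ h) := ⟨_, rfl⟩
  have e1 : x ^ (3 ^ h) * Z = Z + 1 := by
    rw [hZ, ← mul_pow, hxz, add_pow_char_pow, one_pow]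
  have e2 : x ^ 13 * z ^ 13 = (z ^ 9 + 1) * (z ^ 3 + 1) * (z + 1) := by
    rw [← mul_pow, hxz]
    have a9 : (z + 1) ^ 9 = z ^ 9 + 1 := by
      have := add_pow_char_pow z 1 3 2
      simpa using this
    have a3 : (z + 1) ^ 3 = z ^ 3 + 1 := by
      have := add_pow_char z 1 3
      simpa using this
    rw [← a9, ← a3]; ring
  have hyz : (x + 1) * z = 1 - z := by linear_combination hxz + z * h3
  have e3 : (x + 1) ^ (3 ^ h) * Z = 1 - Z := by
    rw [hZ, ← mul_pow, hyz, sub_pow_char_pow, one_pow]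
  have e4 : (x + 1) ^ 13 * z ^ 13 = (1 - z ^ 9) * (1 - z ^ 3) * (1 - z) := by
    rw [← mul_pow, hyz]
    have a9 : (1 - z) ^ 9 = 1 - z ^ 9 := by
      have := sub_pow_char_pow (1 : K) z 2 (p := 3)
      simpa using this
    have a3 : (1 - z) ^ 3 = 1 - z ^ 3 := by
      have := sub_pow_char (1 : K) z (p := 3)
      simpa using this
    rw [← a9, ← a3]; ring
  have e5 : (1 - Z) * ((1 - z ^ 9) * (1 - z ^ 3) * (1 - z))
      + (Z + 1) * ((z ^ 9 + 1) * (z ^ 3 + 1) * (z + 1)) + Z * z ^ 13 = 0 := by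
    rw [← e1, ← e2, ← e3, ← e4]
    rw [pow_add, pow_add] at he
    linear_combination (Z * z ^ 13) * he
  have e6 : Z * (z + z ^ 3 + z ^ 9) + z ^ 4 + z ^ 10 + z ^ 12 + 1 = 0 := by
    linear_combination (-1) * e5 + (Z * (z + z ^ 3 + z ^ 9) + z ^ 4 + z ^ 10 + z ^ 12 + 1 + Z * z ^ 13) * h3
  obtain ⟨w, hw⟩ : ∃ w : K, w = z ^ 3 - z := ⟨_, rfl⟩
  have hw3 : w ^ 3 = z ^ 9 - z ^ 3 := by
    rw [hw, sub_pow_char]; ring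
  have e7 : ((Z - z) * w + w ^ 2 - 1) * (w ^ 2 - 1) = 0 := by
    have : (Z - z) * (w ^ 3 - w) + w * w ^ 3 + w ^ 2 + 1 = 0 := by
      rw [hw3, hw]
      linear_combination e6 + (- Z * z ^ 3 - z^10) * h3
    linear_combination this - w ^ 2 * h3
  have hne : w ^ 2 ≠ 1 := by
    intro hh; rw [hw] at hh; exact aux_tr m hm3 hfix z hh
  rcases mul_eq_zero.1 e7 with h7 | h7
  · refine ⟨z, ?_, ?_, ?_⟩
    · rw [← hw]; intro h0; rw [h0] at h7; simp at h7
    · rw [← hw]; exact hne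
    · rw [← hw, ← hZ]; linear_combination h7
  · exact absurd (sub_eq_zero.1 h7) hne

lemma aux_W {K : Type*} [Field K] [CharP K 3] (z Z : K)
    (hv : (Z - z) * (z ^ 3 - z) = 1 - (z ^ 3 - z) ^ 2) :
    (Z ^ 3 - Z) * (z ^ 3 - z) ^ 3 =
      1 - (z ^ 3 - z) ^ 2 - (z ^ 3 - z) ^ 4 - (z ^ 3 - z) ^ 6 := by
  have h3 : (3:K) = 0 := by exact_mod_cast CharP.cast_eq_zero K 3
  obtain ⟨w, hw⟩ : ∃ w : K, w = z ^ 3 - z := ⟨_, rfl⟩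
  have hv3 : ((Z - z) * w) ^ 3 = 1 - w ^ 6 := by
    rw [hw, hv, sub_pow_char]; ring
  have hs : (Z - z) ^ 3 = Z ^ 3 - z ^ 3 := sub_pow_char Z z
  rw [mul_pow, hs] at hv3
  rw [← hw] at hv ⊢
  linear_combination hv3 - w ^ 2 * hv + w ^ 3 * hw * (-1) + w ^ 4 * h3

lemma aux_frob {K : Type*} [Field K] [CharP K 3] (h : ℕ) (z Z : K)
    (hv : (Z - z) * (z ^ 3 - z) = 1 - (z ^ 3 - z) ^ 2) :
    (Z ^ (3 ^ h) - z ^ (3 ^ h)) * ((z ^ (3 ^ h)) ^ 3 - z ^ (3 ^ h)) =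
      1 - ((z ^ (3 ^ h)) ^ 3 - z ^ (3 ^ h)) ^ 2 := by
  have := congrArg (iterateFrobenius K 3 h) hv
  simpa only [map_sub, map_mul, map_pow, map_one, iterateFrobenius_def] using this

lemma aux_case1 {K : Type*} [Field K] [CharP K 3] (m : ℕ) (hm : Nat.Prime m)
    (hfix : ∀ x : K, x ^ (3 ^ m) = x) (z Z : K)
    (hw0 : z ^ 3 - z ≠ 0) (hw1 : (z ^ 3 - z) ^ 2 ≠ 1)
    (hv : (Z - z) * (z ^ 3 - z) = 1 - (z ^ 3 - z) ^ 2)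
    (hv1 : (z ^ 27 - Z) * (Z ^ 3 - Z) = 1 - (Z ^ 3 - Z) ^ 2) : False := by
  have h3 : (3:K) = 0 := by exact_mod_cast CharP.cast_eq_zero K 3
  have hW := aux_W z Z hv
  obtain ⟨w, hw⟩ : ∃ w : K, w = z ^ 3 - z := ⟨_, rfl⟩
  have hw3 : w ^ 3 = z ^ 9 - z ^ 3 := by
    rw [hw, sub_pow_char]; ring
  have hw9 : w ^ 9 = z ^ 27 - z ^ 9 := by
    have : w ^ 9 = (w ^ 3) ^ 3 := by ring
    rw [this, hw3, sub_pow_char]; ring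
  rw [← hw] at hv hW hw0 hw1
  obtain ⟨W, hWd⟩ : ∃ W : K, W = Z ^ 3 - Z := ⟨_, rfl⟩
  rw [← hWd] at hv1 hW
  have hz27 : z ^ 27 - Z = w + w ^ 3 + w ^ 9 - (Z - z) := by
    rw [hw9, hw3, hw]; ring
  rw [hz27] at hv1
  have hF := aux_fac1 h3 (w ^ 2) (W * w ^ 3) (by rw [hW]; ring) (by
    have h1 : (w + w ^ 3 + w ^ 9 - (Z - z)) * w = w ^ 2 + w ^ 4 + w ^ 10 - (1 - w ^ 2) := by
      linear_combination -hv
    have h2 : (W * w ^ 3) * (w ^ 2 + w ^ 4 + w ^ 10 - (1 - w ^ 2)) * w ^ 2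
        = w ^ 6 - (W * w ^ 3) ^ 2 := by
      rw [← h1]; linear_combination w ^ 6 * hv1
    linear_combination h2 - (W * w ^ 3) * hW + (W * w ^ 3) * (w ^ 2) * h3)
  rcases mul_eq_zero.1 hF with h | hq
  · exact hw1 (sub_eq_zero.1 (pow_eq_zero_iff (by norm_num) |>.1 h))
  by_cases h5 : m = 5
  · subst h5
    have hz := hfix z
    norm_num at hz
    have hw27 : w ^ 27 = z ^ 81 - z ^ 27 := by
      have : w ^ 27 = (w ^ 9) ^ 3 := by ring
      rw [this, hw9, sub_pow_char]; ring
    have hw81 : w ^ 81 = z ^ 243 - z ^ 81 := by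
      have : w ^ 81 = (w ^ 27) ^ 3 := by ring
      rw [this, hw27, sub_pow_char]; ring
    have htr : w + w ^ 3 + w ^ 9 + w ^ 27 + w ^ 81 = 0 := by
      rw [hw81, hw27, hw9, hw3, hw, hz]; ring
    have hp : (1 + w + w ^ 2 + w ^ 4 + w ^ 5) * (1 - w + w ^ 2 + w ^ 4 - w ^ 5) = 0 := by
      linear_combination (-1) * hq + w ^ 4 * h3
    rcases mul_eq_zero.1 hp with hp | hp
    · have := aux_trace h3 w hp
      rw [htr] at this
      exact one_ne_zero (α := K) (by linear_combination this)
    · have := aux_trace h3 (-w) (by linear_combination hp)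
      exact one_ne_zero (α := K) (by linear_combination this + htr)
  · have hc : Nat.Coprime m 5 := (Nat.coprime_primes hm (by norm_num)).2 h5
    have := aux_cop m hc hfix _ (aux_cub1 h3 _ hq)
    have one := one_ne_zero (α := K)
    rcases aux_cases _ this with h | h | h
    · exact hw0 (pow_eq_zero_iff (by norm_num) |>.1 h)
    · exact hw1 h
    · rw [h] at hq; exact one (by linear_combination hq + h3)

lemma aux_case2 {K : Type*} [Field K] [CharP K 3] (m : ℕ) (hc : Nat.Coprime m 5) (hodd : Odd m)
    (hfix : ∀ x : K, x ^ (3 ^ m) = x) (z Z Y : K)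
    (hw0 : z ^ 3 - z ≠ 0) (hw1 : (z ^ 3 - z) ^ 2 ≠ 1)
    (hv : (Z - z) * (z ^ 3 - z) = 1 - (z ^ 3 - z) ^ 2)
    (hv1 : (Y - Z) * (Z ^ 3 - Z) = 1 - (Z ^ 3 - Z) ^ 2)
    (hv2 : (z ^ 3 - Y) * (Y ^ 3 - Y) = 1 - (Y ^ 3 - Y) ^ 2) : False := by
  have h3 : (3:K) = 0 := by exact_mod_cast CharP.cast_eq_zero K 3
  have hW := aux_W z Z hv
  have hU := aux_W Z Y hv1
  obtain ⟨w, hw⟩ : ∃ w : K, w = z ^ 3 - z := ⟨_, rfl⟩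
  rw [← hw] at hv hW hw0 hw1
  obtain ⟨W, hWd⟩ : ∃ W : K, W = Z ^ 3 - Z := ⟨_, rfl⟩
  rw [← hWd] at hv1 hW hU
  obtain ⟨U, hUd⟩ : ∃ U : K, U = Y ^ 3 - Y := ⟨_, rfl⟩
  rw [← hUd] at hv2 hU
  obtain ⟨v, hvd⟩ : ∃ v : K, v = Z - z := ⟨_, rfl⟩
  obtain ⟨v1, hv1d⟩ : ∃ v1 : K, v1 = Y - Z := ⟨_, rfl⟩
  have hv2d : z ^ 3 - Y = w - v - v1 := by rw [hw, hvd, hv1d]; ring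
  rw [hv2d] at hv2
  rw [← hvd] at hv
  rw [← hv1d] at hv1
  obtain ⟨N, hN⟩ : ∃ N : K, N = W * w ^ 3 := ⟨_, rfl⟩
  have hA : U * W ^ 3 * w ^ 18 = (w^2)^9 - N^2*(w^2)^6 - N^4*(w^2)^3 - N^6 := by
    rw [hU, hN]; ring
  have hB : (U + w - v - v1) * W ^ 3 * w ^ 18 = U * W ^ 3 * w ^ 18
      + (2*(w^2)-1)*(w^2)^4*N^3 - ((w^2)^3 - N^2)*N^2*(w^2)^3 := by
    rw [hN]
    linear_combination (- W ^ 3 * w ^ 17) * hv - (W ^ 2 * w ^ 18) * hv1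
  have hF := aux_fac2 h3 (w ^ 2) N (U * W ^ 3 * w ^ 18) (by rw [hN, hW]; ring) hA (by
    rw [← hB, hN]
    linear_combination (W ^ 6 * w ^ 36) * hv2)
  have noi := aux_noi h3 m hodd hfix
  rcases mul_eq_zero.1 hF with h | h
  · rcases mul_eq_zero.1 h with h | h
    · exact noi w (eq_neg_of_add_eq_zero_left h)
    · exact noi (w ^ 2 - 1) (by linear_combination h + (1 - w ^ 2) * h3)
  rcases mul_eq_zero.1 h with hq | hQ
  · have := aux_cop m hc hfix _ (aux_cub2 h3 _ hq)
    rcases aux_cases _ this with h | h | h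
    · exact hw0 (pow_eq_zero_iff (by norm_num) |>.1 h)
    · exact hw1 h
    · exact noi w h
  · obtain ⟨t, ht⟩ := aux_T h3 _ hQ
    exact noi t ht

theorem stmt1 (m h : ℕ) (hm : Nat.Prime m) (hodd : Odd m)
    (hh1 : 3 ≤ h) (hh2 : h ≤ m - 1)
    (hcond : (5 ≤ m ∧ 2 * h ≡ 3 [MOD m]) ∨ (m % 3 = 2 ∧ h = (m + 1) / 3)) :
    ∀ x : GaloisField 3 m, (x + 1) ^ (3 ^ h + 13) + x ^ (3 ^ h + 13) + 1 = 0 ↔ x = 1 := by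
  intro x
  have h3 : (3 : GaloisField 3 m) = 0 := by
    exact_mod_cast CharP.cast_eq_zero (GaloisField 3 m) 3
  have hfix : ∀ x : GaloisField 3 m, x ^ (3 ^ m) = x := by
    intro x
    let _ := Fintype.ofFinite (GaloisField 3 m)
    have hcard : Fintype.card (GaloisField 3 m) = 3 ^ m := by
      rw [← Nat.card_eq_fintype_card]; exact GaloisField.card 3 m hm.ne_zero
    rw [← hcard]; exact FiniteField.pow_card x
  constructor
  · intro he
    by_contra hx
    have hm3 : ¬ 3 ∣ m := by
      intro hd
      have : 3 = m := (Nat.prime_dvd_prime_iff_eq Nat.prime_three hm).1 hd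
      rcases hcond with hc | hc <;> omega
    obtain ⟨z, hw0, hw1, hv⟩ := aux_red m h hm3 hfix x hx he
    have hv1 := aux_frob h _ _ hv
    rcases hcond with ⟨h5, hmod⟩ | ⟨hmod, hh⟩
    · have h2h : 2 * h = 3 + m * 1 := by
        have hd : m ∣ 2 * h - 3 := (Nat.modEq_iff_dvd' (by omega)).1 hmod.symm
        obtain ⟨k, hk⟩ := hd
        have hk2 : k < 2 := by
          by_contra hk2
          have : m * 2 ≤ m * k := Nat.mul_le_mul_left m (by omega)
          omega
        interval_cases k <;> omega
      have hZ : (z ^ (3 ^ h)) ^ (3 ^ h) = z ^ 27 := by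
        rw [← pow_mul, ← pow_add, ← two_mul, h2h, aux_mod m hfix]; norm_num
      rw [hZ] at hv1
      exact aux_case1 m hm hfix z _ hw0 hw1 hv hv1
    · have hv2 := aux_frob h _ _ hv1
      have h3h : h + (h + h) = 1 + m * 1 := by omega
      have hZ : ((z ^ (3 ^ h)) ^ (3 ^ h)) ^ (3 ^ h) = z ^ 3 := by
        rw [← pow_mul, ← pow_mul, ← pow_add, ← pow_add, h3h, aux_mod m hfix]; norm_num
      rw [hZ] at hv2
      have hc : Nat.Coprime m 5 := (Nat.coprime_primes hm (by norm_num)).2 (by omega)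
      exact aux_case2 m hc hodd hfix z _ _ hw0 hw1 hv hv1 hv2
  · rintro rfl
    have he : Even (3 ^ h + 13) := by
      rw [Nat.even_add]
      have : Odd (3 ^ h) := Odd.pow (by decide)
      have h13 : ¬ Even 13 := by decide
      simp [h13, this]
    have : (1 + 1 : GaloisField 3 m) = -1 := by linear_combination h3
    rw [this, he.neg_one_pow, one_pow]
    linear_combination h3
end

section
/- Let m be an odd prime and let h be an integer with 3 ≤ h ≤ m−1 such that either (I) m ≥ 5 and 2h ≡ 3 (mod m), or (II) m ≡ 2 (mod 3) and h = (m+1)/3. Set e = 3^h + 13. Then the equation (x+1)^e − x^e − 1 = 0 has the unique solution x = 0 in the finite field F_{3^m}; that is, for every x in F_{3^m}, (x+1)^e − x^e − 1 = 0 if and only if x = 0. -/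
/-! Polynomials over the field with three elements, as lists of natural numbers
(lowest coefficient first). -/

namespace TernaryPoly

/-- Value of a coefficient list at a point. -/
def ev {K : Type*} [Field K] (x : K) : List ℕ → K
  | [] => 0
  | a :: l => (a : K) + x * ev x l

/-- Sum. -/
def padd : List ℕ → List ℕ → List ℕ
  | [], m => m
  | a :: l, m =>
    match m with
    | [] => a :: l
    | b :: m => ((a + b) % 3) :: padd l m

/-- Scalar multiple. -/
def psmul (c : ℕ) : List ℕ → List ℕ
  | [] => []
  | a :: l => ((c * a) % 3) :: psmul c l

/-- Product; zero coefficients of the first factor are skipped. -/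
def pmul : List ℕ → List ℕ → List ℕ
  | [], _ => []
  | a :: l, m =>
    match a with
    | 0 => 0 :: pmul l m
    | (c + 1) => padd (psmul (c + 1) m) (0 :: pmul l m)

/-- Cube, in characteristic three. -/
def pcube : List ℕ → List ℕ
  | [] => []
  | a :: l => a :: 0 :: 0 :: pcube l

/-- Test for the zero polynomial. -/
def isZ : List ℕ → Bool
  | [] => true
  | a :: l => (a % 3 == 0) && isZ l

/-- The first `n` ternary digits of a number. -/
def dig : ℕ → ℕ → List ℕ
  | 0, _ => []
  | n + 1, N => (N % 3) :: dig n (N / 3)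

/-- Homogenized numerator of the degree seven map. -/
def hN (a b : List ℕ) : List ℕ :=
  let s := pmul (pmul a b) (pmul a b)
  padd (psmul 2 (pmul (pcube (pmul b b)) a))
    (padd (pmul (pcube b) s)
      (padd (psmul 2 (pmul (pcube a) s)) (psmul 2 (pmul (pcube (pmul a a)) a))))

/-- Homogenized denominator of the degree seven map. -/
def hD (a b : List ℕ) : List ℕ :=
  let s := pmul (pmul a b) (pmul a b)
  padd (pmul (pcube (pmul b b)) b)
    (padd (pmul (pcube b) s)
      (padd (psmul 2 (pmul (pcube a) s)) (pmul (pcube (pmul a a)) b)))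

def N1 : List ℕ := [0, 2, 1, 0, 0, 2, 0, 2]
def D1 : List ℕ := [1, 0, 1, 0, 0, 2, 1]
def N2 : List ℕ := hN N1 D1
def D2 : List ℕ := hD N1 D1
def N3 : List ℕ := hN N2 D2
def D3 : List ℕ := hD N2 D2

def C0 : List ℕ := [1, 1, 2, 0, 2, 1, 1]
def GC : List ℕ := [0, 2, 2, 1, 0, 1]
def QC : List ℕ := [2, 2, 1, 2, 1, 0, 0, 2, 2, 1]
set_option linter.unusedSectionVars false

def G1 : List ℕ := dig 47 9670517885869693470252
def Q1 : List ℕ := dig 45 1315163082793184236012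
def G2 : List ℕ := dig 344
  92701500597813439684320337293220817022810532005038384723343408704629599581458963110916523937626429094295265687661961413013325388993550855342984599187222563749977040
def Q2 : List ℕ := dig 343
  24381338743474548110945955585872166588724425632852363334688693490293132472841885247507652842651501902668110565137610095985882447705337779809302795466468639889798234

set_option maxRecDepth 100000

theorem chkC : isZ (padd (padd (pcube GC) (padd (psmul 2 GC) [2]))
    (psmul 2 (pmul C0 QC))) = true := by
  decide +kernel

theorem chk1 : isZ (padd
    (pmul Q1 (padd (pmul (pcube [0, 0, 0, 0, 0, 0, 0, 0, 0, 1]) D2) (psmul 2 N2)))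
    (psmul 2 (pmul [0, 2, 0, 1] (pmul (pcube C0) (pmul C0 (padd (pmul G1 G1) [1]))))))
    = true := by
  decide +kernel

theorem chk2 : isZ (padd
    (pmul Q2 (padd (pmul [0, 0, 0, 1] D3) (psmul 2 N3)))
    (psmul 2 (pmul [0, 1] (padd (pmul G2 G2) [1])))) = true := by
  decide +kernel

section
variable {K : Type*} [Field K] [CharP K 3]

theorem three0 : (3 : K) = 0 := by
  have := CharP.cast_eq_zero K 3
  exact_mod_cast this

theorem castmod (a : ℕ) : ((a % 3 : ℕ) : K) = a := by
  conv_rhs => rw [← Nat.div_add_mod a 3]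
  push_cast
  rw [three0]; ring

theorem ev_padd (x : K) : ∀ l m, ev x (padd l m) = ev x l + ev x m
  | [], m => by simp [padd, ev]
  | a :: l, [] => by simp [padd, ev]
  | a :: l, b :: m => by
    simp only [padd, ev, ev_padd x l m, castmod]; push_cast; ring

theorem ev_psmul (x : K) (c : ℕ) : ∀ l, ev x (psmul c l) = c * ev x l
  | [] => by simp [psmul, ev]
  | a :: l => by
    simp only [psmul, ev, ev_psmul x c l, castmod]; push_cast; ring

theorem ev_pmul (x : K) : ∀ l m, ev x (pmul l m) = ev x l * ev x m
  | [], m => by simp [pmul, ev]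
  | 0 :: l, m => by
    simp only [pmul, ev, ev_pmul x l m]; push_cast; ring
  | (c + 1) :: l, m => by
    simp only [pmul, ev, ev_padd, ev_psmul, ev_pmul x l m]; push_cast; ring

theorem cube_add (a b : K) : (a + b) ^ 3 = a ^ 3 + b ^ 3 := by
  linear_combination (a ^ 2 * b + a * b ^ 2) * three0 (K := K)

theorem cube_cast (a : ℕ) : ((a : K)) ^ 3 = a := by
  induction a with
  | zero => simp
  | succ n ih => push_cast; rw [cube_add, ih]; ring

theorem ev_pcube (x : K) : ∀ l, ev x (pcube l) = ev x l ^ 3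
  | [] => by simp [pcube, ev]
  | a :: l => by
    simp only [pcube, ev, ev_pcube x l, cube_add, cube_cast, mul_pow]; push_cast; ring

theorem ev_isZ (x : K) : ∀ l, isZ l = true → ev x l = 0
  | [], _ => rfl
  | a :: l, h => by
    simp only [isZ, Bool.and_eq_true, beq_iff_eq] at h
    simp only [ev]
    rw [ev_isZ x l h.2, ← castmod, h.1]; simp

/-- The numerator as a function. -/
def fN (y : K) : K := -y + y ^ 2 - y ^ 5 - y ^ 7
/-- The denominator as a function. -/
def fD (y : K) : K := 1 + y ^ 2 - y ^ 5 + y ^ 6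

theorem two_neg : (2 : K) = -1 := by linear_combination three0 (K := K)

theorem ev_hN (x y : K) (a b : List ℕ) (h : y * ev x b = ev x a) :
    ev x (hN a b) = fN y * ev x b ^ 7 := by
  simp only [hN, ev_padd, ev_psmul, ev_pmul, ev_pcube, ← h, fN]
  push_cast
  rw [two_neg]; ring

theorem ev_hD (x y : K) (a b : List ℕ) (h : y * ev x b = ev x a) :
    ev x (hD a b) = fD y * ev x b ^ 7 := by
  simp only [hD, ev_padd, ev_psmul, ev_pmul, ev_pcube, ← h, fD]
  push_cast
  rw [two_neg]; ring

theorem ev_step (x y z : K) (a b : List ℕ) (h : y * ev x b = ev x a)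
    (h2 : z * fD y = fN y) : z * ev x (hD a b) = ev x (hN a b) := by
  rw [ev_hN x y a b h, ev_hD x y a b h, ← h2]; ring

theorem ev_N1 (x : K) : ev x N1 = fN x := by
  simp only [N1, ev, fN]; push_cast; rw [two_neg]; ring

theorem ev_D1 (x : K) : ev x D1 = fD x := by
  simp only [D1, ev, fD]; push_cast; rw [two_neg]; ring

/-- The common factor as a function. -/
def fC (x : K) : K := 1 + x - x ^ 2 - x ^ 4 + x ^ 5 + x ^ 6

theorem ev_C0 (x : K) : ev x C0 = fC x := by
  simp only [C0, ev, fC]; push_cast; rw [two_neg]; ring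

theorem no_AS (m : ℕ) (hm : ¬ 3 ∣ m) (hK : ∀ t : K, t ^ (3 ^ m) = t) (t : K) :
    t ^ 3 - t - 1 ≠ 0 := by
  intro h
  have key : ∀ k : ℕ, t ^ (3 ^ k) = t + k := by
    intro k
    induction k with
    | zero => simp
    | succ k ih =>
      rw [pow_succ, pow_mul, ih, cube_add, cube_cast]; push_cast
      linear_combination h
  have h1 := key m
  rw [hK t] at h1
  have h2 : (m : K) = 0 := by linear_combination -h1
  exact hm ((CharP.cast_eq_zero_iff K 3 m).1 h2)

theorem no_I (m : ℕ) (hm : Odd m) (hK : ∀ t : K, t ^ (3 ^ m) = t) (t : K) :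
    t * t + 1 ≠ 0 := by
  intro h
  have key : ∀ k : ℕ, t ^ (3 ^ k) = (-1) ^ k * t := by
    intro k
    induction k with
    | zero => simp
    | succ k ih =>
      rw [pow_succ, pow_mul, ih, mul_pow, ← pow_mul, mul_comm k 3, pow_mul]
      have : ((-1 : K)) ^ 3 = -1 := by ring
      rw [this, pow_succ]
      linear_combination (-1) ^ k * t * h
  have h1 := key m
  rw [hK t, hm.neg_one_pow] at h1
  have h2 : t = 0 := by linear_combination (-1 : K) * h1 + t * three0 (K := K)
  rw [h2] at h; simp at h

theorem fC_ne (m : ℕ) (hm : ¬ 3 ∣ m) (hK : ∀ t : K, t ^ (3 ^ m) = t) (x : K) :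
    fC x ≠ 0 := by
  intro h
  have := ev_isZ x _ chkC
  simp only [ev_padd, ev_psmul, ev_pmul, ev_pcube, ev_C0, h] at this
  apply no_AS m hm hK (ev x GC)
  simp only [ev] at this
  push_cast at this
  linear_combination this - (1 + ev x GC) * three0 (K := K)

theorem case1 (m : ℕ) (hodd : Odd m) (hm : ¬ 3 ∣ m) (hK : ∀ t : K, t ^ (3 ^ m) = t)
    (x y : K) (h1 : y * fD x = fN x) (h2 : x ^ 27 * fD y = fN y) : x ^ 3 - x = 0 := by
  have e1 : y * ev x D1 = ev x N1 := by rw [ev_D1, ev_N1, h1]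
  have e2 : x ^ 27 * ev x D2 = ev x N2 := ev_step x y _ _ _ e1 h2
  have := ev_isZ x _ chk1
  simp only [ev_padd, ev_psmul, ev_pmul, ev_pcube, ev_C0, ← e2] at this
  simp only [ev] at this
  push_cast at this
  have h3 : (x ^ 3 - x) * (fC x ^ 4 * (ev x G1 * ev x G1 + 1)) = 0 := by
    rw [two_neg] at this
    linear_combination (-1 : K) * this
  rcases mul_eq_zero.1 h3 with h | h
  · exact h
  · exact absurd h (mul_ne_zero (pow_ne_zero _ (fC_ne m hm hK x)) (no_I m hodd hK _))

theorem case2 (m : ℕ) (hodd : Odd m) (hK : ∀ t : K, t ^ (3 ^ m) = t)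
    (x y z : K) (h1 : y * fD x = fN x) (h2 : z * fD y = fN y)
    (h3 : x ^ 3 * fD z = fN z) : x = 0 := by
  have e1 : y * ev x D1 = ev x N1 := by rw [ev_D1, ev_N1, h1]
  have e2 : z * ev x D2 = ev x N2 := ev_step x y _ _ _ e1 h2
  have e3 : x ^ 3 * ev x D3 = ev x N3 := ev_step x z _ _ _ e2 h3
  have := ev_isZ x _ chk2
  simp only [ev_padd, ev_psmul, ev_pmul, ← e3] at this
  simp only [ev] at this
  push_cast at this
  have h3 : x * (ev x G2 * ev x G2 + 1) = 0 := by
    rw [two_neg] at this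
    linear_combination (-1 : K) * this
  rcases mul_eq_zero.1 h3 with h | h
  · exact h
  · exact absurd h (no_I m hodd hK _)

theorem fD_map (σ : K →+* K) (x : K) : σ (fD x) = fD (σ x) := by simp [fD]
theorem fN_map (σ : K →+* K) (x : K) : σ (fN x) = fN (σ x) := by simp [fN]

end

end TernaryPoly

open TernaryPoly in
theorem stmt2 (m h : ℕ) (hm : Nat.Prime m) (hodd : Odd m)
    (hh1 : 3 ≤ h) (hh2 : h ≤ m - 1)
    (hcond : (5 ≤ m ∧ 2 * h ≡ 3 [MOD m]) ∨ (m % 3 = 2 ∧ h = (m + 1) / 3)) :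
    ∀ x : GaloisField 3 m, (x + 1) ^ (3 ^ h + 13) - x ^ (3 ^ h + 13) - 1 = 0 ↔ x = 0 := by
  intro x
  constructor
  swap
  · rintro rfl
    simp
  intro hx
  have hm0 : m ≠ 0 := hm.ne_zero
  have hm3 : ¬ 3 ∣ m := by
    intro hd
    have := (Nat.prime_dvd_prime_iff_eq Nat.prime_three hm).1 hd
    rcases hcond with hc | hc <;> omega
  have hK : ∀ t : GaloisField 3 m, t ^ (3 ^ m) = t := by
    intro t
    have := Fintype.ofFinite (GaloisField 3 m)
    have hc := GaloisField.card 3 m hm0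
    rw [← hc, Nat.card_eq_fintype_card]
    exact FiniteField.pow_card t
  have t0 : (3 : GaloisField 3 m) = 0 := three0
  set σ : GaloisField 3 m →+* GaloisField 3 m := iterateFrobenius (GaloisField 3 m) 3 h with hσ
  have hs : ∀ t, σ t = t ^ (3 ^ h) := fun t => iterateFrobenius_def 3 h t
  have hy1 : (x + 1) ^ 3 ^ h = σ x + 1 := by rw [← hs]; simp
  have E0 : (σ x + 1) * (x + 1) ^ 13 - σ x * x ^ 13 - 1 = 0 := by
    rw [← hy1, hs, ← pow_add, ← pow_add]; exact hx
  have E1 : fC x * (σ x * fD x - fN x) = 0 := by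
    have h13 : (x + 1) ^ 13 = (x ^ 9 + 1) * (x ^ 3 + 1) * (x + 1) := by
      have a3 : (x + 1) ^ 3 = x ^ 3 + 1 := by rw [cube_add]; ring
      have a9 : (x + 1) ^ 9 = x ^ 9 + 1 := by
        calc (x + 1) ^ 9 = ((x + 1) ^ 3) ^ 3 := by ring
          _ = _ := by rw [a3, cube_add]; ring
      rw [← a3, ← a9]; ring
    rw [h13] at E0
    simp only [fC, fD, fN]
    linear_combination E0 + (σ x * ((-1) * x ^ 4 + (1) * x ^ 7 + (-1) * x ^ 10)
      + ((-1) * x ^ 3 + (1) * x ^ 6 + (-1) * x ^ 9)) * t0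
  have E2 : σ x * fD x = fN x := by
    rcases mul_eq_zero.1 E1 with h | h
    · exact absurd h (fC_ne m hm3 hK x)
    · exact sub_eq_zero.1 h
  have E3 : σ (σ x) * fD (σ x) = fN (σ x) := by
    rw [← fD_map, ← fN_map, ← E2, map_mul]
  have E4 : σ (σ (σ x)) * fD (σ (σ x)) = fN (σ (σ x)) := by
    rw [← fD_map, ← fN_map, ← E3, map_mul]
  rcases hcond with ⟨h5, hc⟩ | ⟨h5, hc⟩
  · have h2h : 2 * h = m + 3 := by
      have hd := (Nat.modEq_iff_dvd' (by omega)).1 hc.symm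
      obtain ⟨k, hk⟩ := hd
      have : k < 2 := by
        by_contra hk2
        have : m * 2 ≤ m * k := Nat.mul_le_mul_left _ (by omega)
        omega
      interval_cases k <;> omega
    have hss : σ (σ x) = x ^ 27 := by
      rw [hs, hs, ← pow_mul, ← pow_add, ← two_mul, h2h, pow_add, pow_mul, hK]; norm_num
    rw [hss] at E3
    have h0 := case1 m hodd hm3 hK x (σ x) E2 E3
    have h1 : x * ((x - 1) * (x + 1)) = 0 := by linear_combination h0
    rcases mul_eq_zero.1 h1 with h | h
    · exact h
    exfalso
    rcases mul_eq_zero.1 h with h | h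
    · have hx1 : x = 1 := sub_eq_zero.1 h
      rw [hx1, map_one] at E0
      have : (1 : GaloisField 3 m) = 0 := by
        linear_combination (-1 : GaloisField 3 m) * E0 + 5461 * t0 - (1 - 1) * t0
      exact one_ne_zero this
    · have hx1 : x = -1 := eq_neg_of_add_eq_zero_left h
      rw [hx1, map_neg, map_one] at E0
      have : (1 : GaloisField 3 m) = 0 := by
        linear_combination E0 + t0
      exact one_ne_zero this
  · have h3h : h + (h + h) = m + 1 := by omega
    have hss : σ (σ (σ x)) = x ^ 3 := by
      rw [hs, hs, hs, ← pow_mul, ← pow_mul, ← pow_add, ← pow_add, h3h, pow_add, pow_mul, hK]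
      norm_num
    rw [hss] at E4
    exact case2 m hodd hK x _ _ E2 E3 E4
end

section
/- Let m be an odd prime and let h be an integer with 3 ≤ h ≤ m−1 such that either (I) m ≥ 5 and 2h ≡ 3 (mod m), or (II) m ≡ 2 (mod 3) and h = (m+1)/3. Set e = 3^h + 13. Then the ternary cyclic code C_{(1,e)} has parameters [3^m − 1, 3^m − 1 − 2m, 4]; that is, its F_3-dimension equals 3^m − 1 − 2m, every nonzero codeword has Hamming weight at least 4, and there exists a nonzero codeword of Hamming weight exactly 4. -/
/-- The parity-check linear map `c ↦ ∑ i, c i • α ^ (v * i)` on `F₃^(3^m - 1)`. -/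
noncomputable def parityMap (m v : ℕ) (α : GaloisField 3 m) :
    (Fin (3 ^ m - 1) → ZMod 3) →ₗ[ZMod 3] GaloisField 3 m where
  toFun c := ∑ i, c i • α ^ (v * (i : ℕ))
  map_add' x y := by simp [add_smul, Finset.sum_add_distrib]
  map_smul' r x := by simp [smul_smul, Finset.smul_sum]

/-- The ternary cyclic code `C_{(1,e)}`: all vectors `c ∈ F₃^(3^m-1)` with
`∑ i, c i • α ^ i = 0` and `∑ i, c i • α ^ (e * i) = 0`. -/
noncomputable def ternaryCyclicCode (m e : ℕ) (α : GaloisField 3 m) :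
    Submodule (ZMod 3) (Fin (3 ^ m - 1) → ZMod 3) :=
  LinearMap.ker (parityMap m 1 α) ⊓ LinearMap.ker (parityMap m e α)

/-! ### Computable ternary polynomials (coefficient lists, low degree first) -/

/-- Ternary digits of a number, as a list of coefficients. -/
def pDec : ℕ → ℕ → List ℕ
  | 0, _ => []
  | k + 1, n => (n % 3) :: pDec k (n / 3)

def pAdd : List ℕ → List ℕ → List ℕ
  | [], m => m
  | a :: l, [] => a :: l
  | a :: l, b :: m => ((a + b) % 3) :: pAdd l m

def pSmul (c : ℕ) : List ℕ → List ℕ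
  | [] => []
  | a :: l => ((c * a) % 3) :: pSmul c l

def pMul : List ℕ → List ℕ → List ℕ
  | [], _ => []
  | 0 :: l, m => 0 :: pMul l m
  | 1 :: l, m => pAdd m (0 :: pMul l m)
  | a :: l, m => pAdd (pSmul a m) (0 :: pMul l m)

def pPow (l : List ℕ) : ℕ → List ℕ
  | 0 => [1]
  | n + 1 => pMul l (pPow l n)

/-- `∑ aᵢ P^i Q^(n-i)` for the list `[a₀, …, aₙ]`. -/
def pHom (P Q : List ℕ) : List ℕ → List ℕ
  | [] => []
  | 0 :: l => pMul P (pHom P Q l)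
  | a :: l => pAdd (pSmul a (pPow Q l.length)) (pMul P (pHom P Q l))

def pZero : List ℕ → Bool
  | [] => true
  | a :: l => (a == 0) && pZero l

/-- Equality of two coefficient lists modulo 3 and modulo trailing zeros. -/
def pEq (l m : List ℕ) : Bool := pZero (pAdd l (pSmul 2 m))

section ev
variable {K : Type*} [Field K] [CharP K 3]

def pEv (x : K) : List ℕ → K
  | [] => 0
  | a :: l => (a : K) + x * pEv x l

lemma three_zero : (3 : K) = 0 := by
  have := CharP.cast_eq_zero K 3
  exact_mod_cast this

lemma cast_mod_three (a : ℕ) : ((a % 3 : ℕ) : K) = (a : K) := by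
  conv_rhs => rw [← Nat.div_add_mod a 3]
  push_cast
  rw [three_zero]; ring

lemma pEv_add (x : K) : ∀ l m : List ℕ, pEv x (pAdd l m) = pEv x l + pEv x m
  | [], m => by simp [pAdd, pEv]
  | a :: l, [] => by simp [pAdd, pEv]
  | a :: l, b :: m => by
    simp only [pAdd, pEv, cast_mod_three, pEv_add x l m]; push_cast; ring

lemma pEv_smul (x : K) (c : ℕ) : ∀ l : List ℕ, pEv x (pSmul c l) = c * pEv x l
  | [] => by simp [pSmul, pEv]
  | a :: l => by
    simp only [pSmul, pEv, cast_mod_three, pEv_smul x c l]; push_cast; ring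

lemma pEv_mul (x : K) : ∀ l m : List ℕ, pEv x (pMul l m) = pEv x l * pEv x m
  | [], m => by simp [pMul, pEv]
  | 0 :: l, m => by
    simp only [pMul, pEv, pEv_mul x l m]; push_cast; ring
  | 1 :: l, m => by
    simp only [pMul, pEv, pEv_add, pEv_mul x l m]; push_cast; ring
  | (a + 2) :: l, m => by
    simp only [pMul, pEv, pEv_add, pEv_smul, pEv_mul x l m]; push_cast; ring

lemma pEv_pow (x : K) (l : List ℕ) : ∀ n : ℕ, pEv x (pPow l n) = pEv x l ^ n
  | 0 => by simp [pPow, pEv]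
  | n + 1 => by simp only [pPow, pEv_mul, pEv_pow x l n]; ring

lemma pEv_zero (x : K) : ∀ l : List ℕ, pZero l = true → pEv x l = 0
  | [], _ => rfl
  | a :: l, h => by
    simp only [pZero, Bool.and_eq_true, beq_iff_eq] at h
    simp [pEv, h.1, pEv_zero x l h.2]

lemma pEv_eq (x : K) (l m : List ℕ) (h : pEq l m = true) : pEv x l = pEv x m := by
  have := pEv_zero x _ h
  rw [pEv_add, pEv_smul] at this
  push_cast at this
  linear_combination this - pEv x m * (three_zero (K := K))

lemma pEv_hom (x y : K) (P Q : List ℕ) (hy : y * pEv x Q = pEv x P) :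
    ∀ l : List ℕ, pEv y l * pEv x Q ^ l.length = pEv x Q * pEv x (pHom P Q l)
  | [] => by simp [pHom, pEv]
  | 0 :: l => by
    have ih := pEv_hom x y P Q hy l
    simp only [pHom, pEv, pEv_mul, List.length_cons]
    rw [← hy]
    push_cast
    linear_combination y * pEv x Q * ih
  | (a + 1) :: l => by
    have ih := pEv_hom x y P Q hy l
    simp only [pHom, pEv, pEv_add, pEv_smul, pEv_mul, pEv_pow, List.length_cons]
    rw [← hy]
    linear_combination y * pEv x Q * ih

lemma pEv_hom' (x y : K) (P Q : List ℕ) (hy : y * pEv x Q = pEv x P) (hQ : pEv x Q ≠ 0)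
    (l : List ℕ) (n : ℕ) (hl : l.length = n + 1) :
    pEv y l * pEv x Q ^ n = pEv x (pHom P Q l) := by
  have := pEv_hom x y P Q hy l
  rw [hl] at this
  apply mul_left_cancel₀ hQ
  rw [← this]; ring

/-- Composition of rational maps. -/
lemma pEv_step (x y z : K) (P Q A B : List ℕ) (n : ℕ) (hA : A.length = n + 1)
    (hB : B.length = n + 1) (hy : y * pEv x Q = pEv x P) (hQ : pEv x Q ≠ 0)
    (hz : z * pEv y B = pEv y A) (hBy : pEv y B ≠ 0) :
    z * pEv x (pHom P Q B) = pEv x (pHom P Q A) ∧ pEv x (pHom P Q B) ≠ 0 := by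
  rw [← pEv_hom' x y P Q hy hQ A n hA, ← pEv_hom' x y P Q hy hQ B n hB]
  refine ⟨by rw [← hz]; ring, mul_ne_zero hBy (pow_ne_zero _ hQ)⟩

end ev

def pX : List ℕ := [0, 1]
def twoP : List ℕ := [1, 0, 1, 0, 0, 0, 2]
def twoQ : List ℕ := [0, 2, 0, 1, 0, 0, 0]
def threeP : List ℕ := [2, 0, 1, 0, 1, 0, 1, 0]
def threeQ : List ℕ := [0, 1, 0, 0, 0, 0, 0, 1]

def cTwo_A : List ℕ := pDec 109 3464190823392710463194526388813364529221040196602810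
def cTwo_B : List ℕ := pDec 107 621626121839674054888896801140539349065679409589684
def cTwo_U : List ℕ := pDec 106 170374921315362028301532140016479106436612283631423
def cTwo_V : List ℕ := pDec 108 2524667795701437880645533874975016843257484241816751
def cW : List ℕ := pDec 77 3362012657159482236214851934487020786
def cThreeI_A : List ℕ := pDec 25 603261656470
def cThreeI_B : List ℕ := pDec 24 199939618755
def cThreeI_U : List ℕ := pDec 23 66684691891
def cThreeI_V : List ℕ := pDec 24 116484783807
def cThreeII_A : List ℕ := pDec 173 23261457966586613532231516522525052808724570451961377823191103369140516593783147838
def cThreeII_B : List ℕ := pDec 171 2992045223788440839092757505521547483276000807808910616139850866330107477500102945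
def cThreeII_U : List ℕ := pDec 170 1086048883465288404570941892841294962501906142032822602579098964105062690566171652
def cThreeII_V : List ℕ := pDec 172 7088627544086235051197041660319645706689934558104414688407329682863287701919157869

/-- `X^3 - X` -/
def pD : List ℕ := [0, 2, 0, 1]
def pFive : List ℕ := [1, 1, 1, 0, 1, 1]
def pFive' : List ℕ := [1, 2, 1, 0, 1, 2]

lemma certTwoII : pEq (pAdd (pHom (pHom twoP twoQ twoP) (pHom twoP twoQ twoQ) twoP)
    (pSmul 2 (pMul (pPow pX 3) (pHom (pHom twoP twoQ twoP) (pHom twoP twoQ twoQ) twoQ))))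
    (pSmul 2 (pAdd (pMul cTwo_A cTwo_A) (pMul cTwo_B cTwo_B))) = true := by decide +kernel
lemma certTwoII' : pEq (pAdd (pMul cTwo_U cTwo_A) (pMul cTwo_V cTwo_B)) [1] = true := by
  decide +kernel
lemma certTwoI : pEq (pAdd (pHom twoP twoQ twoP)
    (pSmul 2 (pMul (pPow pX 27) (pHom twoP twoQ twoQ))))
    (pSmul 2 (pMul (pPow (pAdd (pMul pD pD) [2]) 4)
      (pMul (pHom pD [1] pFive) (pHom pD [1] pFive')))) = true := by decide +kernel
lemma certW : pEq (pAdd [1] (pAdd pX (pAdd (pPow pX 3) (pAdd (pPow pX 9)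
    (pAdd (pPow pX 27) (pPow pX 81)))))) (pMul cW pFive) = true := by decide +kernel
lemma certThreeI : pEq (pAdd (pHom threeP threeQ threeP)
    (pSmul 2 (pMul (pPow pX 27) (pHom threeP threeQ threeQ))))
    (pSmul 2 (pMul (pMul (pMul pX [2, 0, 1]) (pPow [2, 0, 2, 0, 0, 0, 1] 4))
      (pAdd (pMul cThreeI_A cThreeI_A) (pMul cThreeI_B cThreeI_B)))) = true := by decide +kernel
lemma certThreeI' :
    pEq (pAdd (pMul cThreeI_U cThreeI_A) (pMul cThreeI_V cThreeI_B)) [1] = true := by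
  decide +kernel
lemma certThreeII : pEq (pAdd (pHom (pHom threeP threeQ threeP) (pHom threeP threeQ threeQ) threeP)
    (pSmul 2 (pMul (pPow pX 3)
      (pHom (pHom threeP threeQ threeP) (pHom threeP threeQ threeQ) threeQ))))
    (pMul [2, 0, 1] (pAdd (pMul cThreeII_A cThreeII_A) (pMul cThreeII_B cThreeII_B))) = true := by
  decide +kernel
lemma certThreeII' :
    pEq (pAdd (pMul cThreeII_U cThreeII_A) (pMul cThreeII_V cThreeII_B)) [1] = true := by
  decide +kernel
section fld
variable {K : Type*} [Field K] [CharP K 3]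

lemma iter_AS (x c : K) (hc : c ^ 3 = c) (j : ℕ) (h : x ^ 3 ^ j = x + c) (k : ℕ) :
    x ^ 3 ^ (j * k) = x + k * c := by
  have hcn : ∀ n : ℕ, c ^ 3 ^ n = c := by
    intro n
    induction n with
    | zero => simp
    | succ n ih => rw [pow_succ, pow_mul, ih, hc]
  haveI : Fact (Nat.Prime 3) := ⟨Nat.prime_three⟩
  induction k with
  | zero => simp
  | succ k ih =>
    have hk : ∀ n k : ℕ, ((k : K)) ^ 3 ^ n = k := by
      intro n k
      have := map_natCast (iterateFrobenius K 3 n) k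
      rwa [iterateFrobenius_def] at this
    rw [Nat.mul_succ, pow_add, pow_mul, ih, add_pow_char_pow, mul_pow, hk, hcn, h]
    push_cast; ring

lemma no_AS (m : ℕ) (hm3 : ¬ 3 ∣ m) (x c : K) (hx : x ^ 3 ^ m = x) (hc : c ^ 3 = c)
    (hc0 : c ≠ 0) (j : ℕ) (h : x ^ 3 ^ j = x + c) : False := by
  have h1 := iter_AS x c hc j h m
  have h2 := iter_AS x 0 (by simp) m (by simpa using hx) j
  rw [mul_comm] at h2
  rw [h2] at h1
  have h3 : (m : K) * c = 0 := by linear_combination -h1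
  rcases mul_eq_zero.1 h3 with h4 | h4
  · exact hm3 ((CharP.cast_eq_zero_iff K 3 m).1 h4)
  · exact hc0 h4

/-- the only roots of `X^27 - X` in the field are those of `X^3 - X`. -/
lemma no_deg3 (m : ℕ) (hm3 : ¬ 3 ∣ m) (x : K) (hx : x ^ 3 ^ m = x) (h : x ^ 27 = x) :
    x ^ 3 = x := by
  have hit : ∀ n : ℕ, (fun y : K => y ^ 3)^[n] x = x ^ 3 ^ n := by
    intro n
    induction n with
    | zero => simp
    | succ n ih => rw [Function.iterate_succ_apply', ih, ← pow_mul, pow_succ]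
  have h1 : Function.IsPeriodicPt (fun y : K => y ^ 3) m x := by
    unfold Function.IsPeriodicPt Function.IsFixedPt; rw [hit, hx]
  have h2 : Function.IsPeriodicPt (fun y : K => y ^ 3) 3 x := by
    unfold Function.IsPeriodicPt Function.IsFixedPt; rw [hit]; simpa using h
  have h3 := h1.gcd h2
  rw [Nat.Coprime.gcd_eq_one (((Nat.Prime.coprime_iff_not_dvd Nat.prime_three).2 hm3).symm)] at h3
  simpa [Function.IsPeriodicPt, Function.IsFixedPt] using h3

lemma cubes (x : K) (h : x ^ 3 = x) : x = 0 ∨ x = 1 ∨ x = -1 := by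
  have : x * ((x - 1) * (x + 1)) = 0 := by linear_combination h
  rcases mul_eq_zero.1 this with h | h
  · exact Or.inl h
  · rcases mul_eq_zero.1 h with h | h
    · right; left; linear_combination h
    · right; right; linear_combination h

/-- `x^6 - x^2 - 1` has no roots. -/
lemma no_six (m : ℕ) (hm3 : ¬ 3 ∣ m) (x : K) (hx : x ^ 3 ^ m = x) : x ^ 6 - x ^ 2 - 1 ≠ 0 := by
  intro h
  have h27 : x ^ 27 = x := by
    have h3 : (3 : K) = 0 := three_zero
    grind
  rcases cubes x (no_deg3 m hm3 x hx h27) with rfl | rfl | rfl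
  · norm_num at h
  · norm_num at h
  · norm_num at h

lemma D_ne (m : ℕ) (hm3 : ¬ 3 ∣ m) (x : K) (hx : x ^ 3 ^ m = x) : (x ^ 3 - x) ^ 2 - 1 ≠ 0 := by
  intro h
  have : (x ^ 3 - x - 1) * (x ^ 3 - x - -1) = 0 := by linear_combination h
  rcases mul_eq_zero.1 this with h | h
  · exact no_AS m hm3 x 1 hx (by norm_num) one_ne_zero 1 (by linear_combination h)
  · exact no_AS m hm3 x (-1) hx (by norm_num) (neg_ne_zero.2 one_ne_zero) 1 (by linear_combination h)

lemma two_red (m : ℕ) (hm3 : ¬ 3 ∣ m) (t y : K) (ht : t ^ 3 ^ m = t)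
    (h : y*t*t^3*t^9 + (y+1)*(t+1)*(t^3+1)*(t^9+1)+(y-1)*(t-1)*(t^3-1)*(t^9-1)=0) :
    (t^3-t)*(y+t^3+t) = 1 := by
  have : ((t^3-t)^2-1)*((t^3-t)*(y+t^3+t)-1) = 0 := by grind
  have := (mul_eq_zero.1 this).resolve_left (D_ne m hm3 t ht)
  linear_combination this

lemma three_red (m : ℕ) (hm3 : ¬ 3 ∣ m) (t y : K) (ht : t ^ 3 ^ m = t)
    (h : (y+1)*(t+1)*(t^3+1)*(t^9+1)+(y-1)*(t-1)*(t^3-1)*(t^9-1)=y*t*t^3*t^9) :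
    y*(t+t^7) = t^6+t^4+t^2-1 := by
  have : (t^6-t^2-1)*(y*(t+t^7)-(t^6+t^4+t^2-1)) = 0 := by grind
  have := (mul_eq_zero.1 this).resolve_left (no_six m hm3 t ht)
  linear_combination this

lemma five_ne (m : ℕ) (hm3 : ¬ 3 ∣ m) (x : K) (hx : x ^ 3 ^ m = x) (D : K) (hD : D = x ^ 3 - x)
    (h : pEv D pFive = 0) : False := by
  have h1 := pEv_eq D _ _ certW
  simp only [pEv_add, pEv_mul, pEv_pow, h, mul_zero] at h1
  simp only [pX, pEv] at h1
  push_cast at h1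
  haveI : Fact (Nat.Prime 3) := ⟨Nat.prime_three⟩
  have fr : ∀ a b : K, (a - b) ^ 3 = a ^ 3 - b ^ 3 := fun a b => sub_pow_char a b
  have e1 : D ^ 3 = x ^ 9 - x ^ 3 := by rw [hD, fr]; ring
  have e2 : D ^ 9 = x ^ 27 - x ^ 9 := by
    rw [show D ^ 9 = (D ^ 3) ^ 3 by ring, e1, fr]; ring
  have e3 : D ^ 27 = x ^ 81 - x ^ 27 := by
    rw [show D ^ 27 = (D ^ 9) ^ 3 by ring, e2, fr]; ring
  have e4 : D ^ 81 = x ^ 243 - x ^ 81 := by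
    rw [show D ^ 81 = (D ^ 27) ^ 3 by ring, e3, fr]; ring
  refine no_AS m hm3 x (-1) hx (by norm_num) (neg_ne_zero.2 one_ne_zero) 5 ?_
  norm_num at h1 ⊢
  rw [e1, e2, e3, e4, hD] at h1
  linear_combination h1

lemma five_ne' (m : ℕ) (hm3 : ¬ 3 ∣ m) (x : K) (hx : x ^ 3 ^ m = x)
    (h : pEv (x ^ 3 - x) pFive' = 0) : False := by
  have hodd : Odd (3 ^ m) := Odd.pow (by decide)
  refine five_ne m hm3 (-x) (by rw [hodd.neg_pow, hx]) (-(x ^ 3 - x)) (by ring) ?_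
  rw [← h]
  simp only [pFive, pFive', pEv]
  push_cast
  linear_combination (-(x ^ 3 - x) - (x ^ 3 - x) ^ 5) * (three_zero (K := K))

lemma sq_sum (hsq : ∀ a b : K, a ^ 2 + b ^ 2 = 0 → a = 0) (x : K) (A B U V : List ℕ)
    (h : pEq (pAdd (pMul U A) (pMul V B)) [1] = true) :
    pEv x A * pEv x A + pEv x B * pEv x B ≠ 0 := by
  intro h0
  have ha := hsq (pEv x A) (pEv x B) (by linear_combination h0)
  have hb := hsq (pEv x B) (pEv x A) (by linear_combination h0)
  have := pEv_eq x _ _ h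
  simp [pEv_add, pEv_mul, ha, hb, pEv] at this

lemma twoPQ (t y : K) (h : (t^3-t)*(y+t^3+t) = 1) :
    y * pEv t twoQ = pEv t twoP ∧ pEv t twoQ ≠ 0 := by
  have e : pEv t twoQ = t ^ 3 - t := by
    simp only [twoQ, pEv]; push_cast; linear_combination t * (three_zero (K := K))
  rw [e]
  refine ⟨?_, left_ne_zero_of_mul_eq_one h⟩
  simp only [twoP, pEv]; push_cast
  linear_combination h - t ^ 6 * (three_zero (K := K))

lemma threePQ (hsq : ∀ a b : K, a ^ 2 + b ^ 2 = 0 → a = 0) (t y : K) (ht : t ≠ 0)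
    (h : y*(t+t^7) = t^6+t^4+t^2-1) :
    y * pEv t threeQ = pEv t threeP ∧ pEv t threeQ ≠ 0 := by
  have e : pEv t threeQ = t + t ^ 7 := by
    simp only [threeQ, pEv]; push_cast; ring
  rw [e]
  refine ⟨?_, ?_⟩
  · simp only [threeP, pEv]; push_cast
    linear_combination h - (three_zero (K := K))
  · intro h0
    have h1 : t * (1 ^ 2 + (t ^ 3) ^ 2) = 0 := by linear_combination h0
    have := hsq _ _ ((mul_eq_zero.1 h1).resolve_left ht)
    exact one_ne_zero this

lemma two_caseI (m : ℕ) (hm3 : ¬ 3 ∣ m) (t y : K) (ht : t ^ 3 ^ m = t)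
    (h1 : (t^3-t)*(y+t^3+t) = 1) (h2 : (y^3-y)*(t^27+y^3+y) = 1) : False := by
  obtain ⟨a1, b1⟩ := twoPQ t y h1
  obtain ⟨a2, b2⟩ := twoPQ y _ h2
  obtain ⟨a3, b3⟩ := pEv_step t y _ twoP twoQ twoP twoQ 6 rfl rfl a1 b1 a2 b2
  have c := pEv_eq t _ _ certTwoI
  have eX : pEv t pX = t := by simp [pX, pEv]
  have eD : pEv t pD = t ^ 3 - t := by
    simp only [pD, pEv]; push_cast; linear_combination t * (three_zero (K := K))
  have e1 : pEv t [1] = 1 := by simp [pEv]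
  have e2 : pEv t [2] = -1 := by
    simp only [pEv]; push_cast; linear_combination (three_zero (K := K))
  have hc := pEv_hom t (t ^ 3 - t) pD [1] (by rw [e1, eD, mul_one])
  simp only [e1, one_pow, one_mul, mul_one] at hc
  simp only [pEv_add, pEv_mul, pEv_pow, pEv_smul, eX, eD, e2, ← hc] at c
  rw [← a3] at c
  push_cast at c
  have c' : (((t ^ 3 - t) ^ 2 - 1) ^ 4 * (pEv (t ^ 3 - t) pFive * pEv (t ^ 3 - t) pFive')) = 0 := by
    linear_combination c + (-t ^ 27 * pEv t (pHom twoP twoQ twoQ) +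
      (((t ^ 3 - t) ^ 2 - 1) ^ 4 * (pEv (t ^ 3 - t) pFive * pEv (t ^ 3 - t) pFive')))
        * (three_zero (K := K))
  rcases mul_eq_zero.1 c' with c | c
  · exact D_ne m hm3 t ht (pow_eq_zero_iff (by norm_num) |>.1 c)
  · rcases mul_eq_zero.1 c with c | c
    · exact five_ne m hm3 t ht _ rfl c
    · exact five_ne' m hm3 t ht c

lemma two_caseII (hsq : ∀ a b : K, a ^ 2 + b ^ 2 = 0 → a = 0) (t y z : K)
    (h1 : (t^3-t)*(y+t^3+t) = 1) (h2 : (y^3-y)*(z+y^3+y) = 1)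
    (h3 : (z^3-z)*(t^3+z^3+z) = 1) : False := by
  obtain ⟨a1, b1⟩ := twoPQ t y h1
  obtain ⟨a2, b2⟩ := twoPQ y _ h2
  obtain ⟨a3, b3⟩ := twoPQ z _ h3
  obtain ⟨a4, b4⟩ := pEv_step t y _ twoP twoQ twoP twoQ 6 rfl rfl a1 b1 a2 b2
  obtain ⟨a5, b5⟩ := pEv_step t z _ _ _ twoP twoQ 6 rfl rfl a4 b4 a3 b3
  have c := pEv_eq t _ _ certTwoII
  have eX : pEv t pX = t := by simp [pX, pEv]
  have n := sq_sum hsq t _ _ _ _ certTwoII'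
  simp only [pEv_add, pEv_mul, pEv_pow, pEv_smul, eX] at c
  rw [← a5] at c
  push_cast at c
  generalize pEv t (pHom _ _ _) = W at c
  apply n
  linear_combination c + (-t ^ 3 * W + pEv t cTwo_A * pEv t cTwo_A + pEv t cTwo_B * pEv t cTwo_B)
    * (three_zero (K := K))

lemma three_caseI (hsq : ∀ a b : K, a ^ 2 + b ^ 2 = 0 → a = 0)
    (m : ℕ) (hm3 : ¬ 3 ∣ m) (t y : K) (ht : t ^ 3 ^ m = t) (t0 : t ≠ 0) (y0 : y ≠ 0)
    (h1 : y*(t+t^7) = t^6+t^4+t^2-1) (h2 : t^27*(y+y^7) = y^6+y^4+y^2-1) : t ^ 2 = 1 := by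
  obtain ⟨a1, b1⟩ := threePQ hsq t y t0 h1
  obtain ⟨a2, b2⟩ := threePQ hsq y _ y0 h2
  obtain ⟨a3, b3⟩ := pEv_step t y _ threeP threeQ threeP threeQ 7 rfl rfl a1 b1 a2 b2
  have c := pEv_eq t _ _ certThreeI
  have eX : pEv t pX = t := by simp [pX, pEv]
  have n := sq_sum hsq t _ _ _ _ certThreeI'
  have e1 : pEv t [2, 0, 1] = t ^ 2 - 1 := by
    simp only [pEv]; push_cast; linear_combination (three_zero (K := K))
  have e2 : pEv t [2, 0, 2, 0, 0, 0, 1] = t ^ 6 - t ^ 2 - 1 := by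
    simp only [pEv]; push_cast; linear_combination (1 + t ^ 2) * (three_zero (K := K))
  simp only [pEv_add, pEv_mul, pEv_pow, pEv_smul, eX, e1, e2] at c
  rw [← a3] at c
  push_cast at c
  have c' : (t * (t ^ 2 - 1) * (t ^ 6 - t ^ 2 - 1) ^ 4) *
    (pEv t cThreeI_A * pEv t cThreeI_A + pEv t cThreeI_B * pEv t cThreeI_B) = 0 := by
    linear_combination c + (-t ^ 27 * pEv t (pHom threeP threeQ threeQ) +
      (t * (t ^ 2 - 1) * (t ^ 6 - t ^ 2 - 1) ^ 4) *
    (pEv t cThreeI_A * pEv t cThreeI_A + pEv t cThreeI_B * pEv t cThreeI_B))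
        * (three_zero (K := K))
  have c2 := (mul_eq_zero.1 c').resolve_right n
  have c3 := (mul_eq_zero.1 c2).resolve_right (pow_ne_zero _ (no_six m hm3 t ht))
  have c4 := (mul_eq_zero.1 c3).resolve_left t0
  linear_combination c4

lemma three_caseII (hsq : ∀ a b : K, a ^ 2 + b ^ 2 = 0 → a = 0)
    (t y z : K) (t0 : t ≠ 0) (y0 : y ≠ 0) (z0 : z ≠ 0)
    (h1 : y*(t+t^7) = t^6+t^4+t^2-1) (h2 : z*(y+y^7) = y^6+y^4+y^2-1)
    (h3 : t^3*(z+z^7) = z^6+z^4+z^2-1) : t ^ 2 = 1 := by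
  obtain ⟨a1, b1⟩ := threePQ hsq t y t0 h1
  obtain ⟨a2, b2⟩ := threePQ hsq y _ y0 h2
  obtain ⟨a3, b3⟩ := threePQ hsq z _ z0 h3
  obtain ⟨a4, b4⟩ := pEv_step t y _ threeP threeQ threeP threeQ 7 rfl rfl a1 b1 a2 b2
  obtain ⟨a5, b5⟩ := pEv_step t z _ _ _ threeP threeQ 7 rfl rfl a4 b4 a3 b3
  have c := pEv_eq t _ _ certThreeII
  have eX : pEv t pX = t := by simp [pX, pEv]
  have n := sq_sum hsq t _ _ _ _ certThreeII'
  have e1 : pEv t [2, 0, 1] = t ^ 2 - 1 := by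
    simp only [pEv]; push_cast; linear_combination (three_zero (K := K))
  simp only [pEv_add, pEv_mul, pEv_pow, pEv_smul, eX, e1] at c
  rw [← a5] at c
  push_cast at c
  generalize pEv t (pHom _ _ _) = W at c
  have c' : (t ^ 2 - 1) * (pEv t cThreeII_A * pEv t cThreeII_A
      + pEv t cThreeII_B * pEv t cThreeII_B) = 0 := by
    linear_combination -c + (t ^ 3 * W) * (three_zero (K := K))
  have := (mul_eq_zero.1 c').resolve_right n
  linear_combination this

end fld
section main
variable {K : Type*} [Field K] [CharP K 3]

/-- the two arithmetic cases, as properties of `σ : x ↦ x ^ 3 ^ h`. -/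
def SigmaCase (K : Type*) [Field K] (h : ℕ) : Prop :=
  (∀ x : K, (x ^ 3 ^ h) ^ 3 ^ h = x ^ 27) ∨ (∀ x : K, ((x ^ 3 ^ h) ^ 3 ^ h) ^ 3 ^ h = x ^ 3)

lemma sigma_add (h : ℕ) (a b : K) : (a + b) ^ 3 ^ h = a ^ 3 ^ h + b ^ 3 ^ h :=
  haveI : Fact (Nat.Prime 3) := ⟨Nat.prime_three⟩
  add_pow_char_pow a b 3 h

lemma sigma_sub (h : ℕ) (a b : K) : (a - b) ^ 3 ^ h = a ^ 3 ^ h - b ^ 3 ^ h :=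
  haveI : Fact (Nat.Prime 3) := ⟨Nat.prime_three⟩
  sub_pow_char_pow a b h

lemma e_pow (h : ℕ) (t : K) : t ^ (3 ^ h + 13) = t ^ 3 ^ h * t * t ^ 3 * t ^ 9 := by
  rw [pow_add]; ring

lemma e_pow_add (h : ℕ) (t : K) : (t + 1) ^ (3 ^ h + 13) =
    (t ^ 3 ^ h + 1) * (t + 1) * (t ^ 3 + 1) * (t ^ 9 + 1) := by
  have h1 := sigma_add 1 t 1
  have h2 := sigma_add 2 t 1
  norm_num at h1 h2
  rw [e_pow, sigma_add, h1, h2, one_pow]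

lemma e_pow_sub (h : ℕ) (t : K) : (t - 1) ^ (3 ^ h + 13) =
    (t ^ 3 ^ h - 1) * (t - 1) * (t ^ 3 - 1) * (t ^ 9 - 1) := by
  have h1 := sigma_sub 1 t 1
  have h2 := sigma_sub 2 t 1
  norm_num at h1 h2
  rw [e_pow, sigma_sub, h1, h2, one_pow]

lemma two_sigma (h : ℕ) (t y : K) (h1 : (t^3-t)*(y+t^3+t) = 1) :
    (((t ^ 3 ^ h)^3-(t ^ 3 ^ h))*((y ^ 3 ^ h)+(t ^ 3 ^ h)^3+(t ^ 3 ^ h)) = 1) := by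
  have := congrArg (fun x : K => x ^ 3 ^ h) h1
  simp only [mul_pow, sigma_add, sigma_sub, one_pow] at this
  rw [← this]; simp only [← pow_mul, mul_comm]

lemma three_sigma (h : ℕ) (t y : K) (h1 : y*(t+t^7) = t^6+t^4+t^2-1) :
    (y ^ 3 ^ h)*((t ^ 3 ^ h)+(t ^ 3 ^ h)^7) = (t ^ 3 ^ h)^6+(t ^ 3 ^ h)^4+(t ^ 3 ^ h)^2-1 := by
  have := congrArg (fun x : K => x ^ 3 ^ h) h1
  simp only [mul_pow, sigma_add, sigma_sub, one_pow] at this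
  simp only [← pow_mul, mul_comm] at this ⊢
  exact this

lemma two_main (hsq : ∀ a b : K, a ^ 2 + b ^ 2 = 0 → a = 0) (m h : ℕ) (hm3 : ¬ 3 ∣ m)
    (hK : ∀ x : K, x ^ 3 ^ m = x) (hS : SigmaCase K h) (t : K)
    (ht : t ^ (3 ^ h + 13) + (t + 1) ^ (3 ^ h + 13) + (t - 1) ^ (3 ^ h + 13) = 0) : False := by
  rw [e_pow, e_pow_add, e_pow_sub] at ht
  have h1 := two_red m hm3 t _ (hK t) ht
  have h2 := two_sigma h _ _ h1
  have h3 := two_sigma h _ _ h2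
  rcases hS with hS | hS
  · rw [hS] at h2
    exact two_caseI m hm3 t _ (hK t) h1 h2
  · rw [hS] at h3
    exact two_caseII hsq t _ _ h1 h2 h3

lemma three_main (hsq : ∀ a b : K, a ^ 2 + b ^ 2 = 0 → a = 0) (m h : ℕ) (hm3 : ¬ 3 ∣ m)
    (hK : ∀ x : K, x ^ 3 ^ m = x) (hS : SigmaCase K h) (t : K) (t0 : t ≠ 0)
    (ht : (t + 1) ^ (3 ^ h + 13) + (t - 1) ^ (3 ^ h + 13) = t ^ (3 ^ h + 13)) : t ^ 2 = 1 := by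
  rw [e_pow_add, e_pow_sub, e_pow] at ht
  have h1 := three_red m hm3 t _ (hK t) ht
  have h2 := three_sigma h _ _ h1
  have h3 := three_sigma h _ _ h2
  have y0 : t ^ 3 ^ h ≠ 0 := pow_ne_zero _ t0
  rcases hS with hS | hS
  · rw [hS] at h2
    exact three_caseI hsq m hm3 t _ (hK t) t0 y0 h1 h2
  · rw [hS] at h3
    exact three_caseII hsq t _ _ t0 y0 (pow_ne_zero _ y0) h1 h2 h3

lemma wt_same (hsq : ∀ a b : K, a ^ 2 + b ^ 2 = 0 → a = 0) (m h : ℕ) (hm3 : ¬ 3 ∣ m)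
    (hK : ∀ x : K, x ^ 3 ^ m = x) (hS : SigmaCase K h) (X Y Z : K) (hXY : X ≠ Y)
    (h1 : X + Y + Z = 0)
    (h2 : X ^ (3 ^ h + 13) + Y ^ (3 ^ h + 13) + Z ^ (3 ^ h + 13) = 0) : False := by
  have hv : Y - X ≠ 0 := sub_ne_zero.2 hXY.symm
  obtain ⟨v, hvd⟩ : ∃ v, v = Y - X := ⟨_, rfl⟩
  rw [← hvd] at hv
  obtain ⟨t, ht⟩ : ∃ t, t = X / v := ⟨_, rfl⟩
  have eX : X = t * v := by rw [ht]; field_simp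
  have eY : Y = (t + 1) * v := by linear_combination eX - hvd
  have eZ : Z = (t - 1) * v := by
    linear_combination h1 - eX - eY - t * v * (three_zero (K := K))
  rw [eX, eY, eZ, mul_pow, mul_pow, mul_pow, ← add_mul, ← add_mul] at h2
  exact two_main hsq m h hm3 hK hS t
    ((mul_eq_zero.1 h2).resolve_right (pow_ne_zero _ hv))

lemma e_even (h : ℕ) : Even (3 ^ h + 13) :=
  Odd.add_odd (Odd.pow (by decide)) (by decide)

lemma wt_diff (hsq : ∀ a b : K, a ^ 2 + b ^ 2 = 0 → a = 0) (m h : ℕ) (hm3 : ¬ 3 ∣ m)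
    (hK : ∀ x : K, x ^ 3 ^ m = x) (hS : SigmaCase K h) (X Y Z : K) (hX : X ≠ 0) (hY : Y ≠ 0)
    (hZ : Z ≠ 0) (hXY : X ≠ Y) (h1 : X + Y = Z)
    (h2 : X ^ (3 ^ h + 13) + Y ^ (3 ^ h + 13) = Z ^ (3 ^ h + 13)) : False := by
  have hv : Y - X ≠ 0 := sub_ne_zero.2 hXY.symm
  obtain ⟨v, hvd⟩ : ∃ v, v = Y - X := ⟨_, rfl⟩
  rw [← hvd] at hv
  obtain ⟨t, ht⟩ : ∃ t, t = -Z / v := ⟨_, rfl⟩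
  have eZ : -Z = t * v := by rw [ht]; field_simp
  have eX : X = (t + 1) * v := by
    linear_combination eZ - h1 - hvd + X * (three_zero (K := K))
  have eY : Y = (t - 1) * v := by
    linear_combination eZ - h1 + hvd + Y * (three_zero (K := K))
  have t0 : t ≠ 0 := by
    rintro rfl
    apply hZ; linear_combination -eZ
  rw [← (e_even h).neg_pow Z, eZ, eX, eY, mul_pow, mul_pow, mul_pow, ← add_mul] at h2
  have := three_main hsq m h hm3 hK hS t t0 (mul_right_cancel₀ (pow_ne_zero _ hv) h2)
  have h3 : (t + 1) * (t - 1) = 0 := by linear_combination this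
  rcases mul_eq_zero.1 h3 with h3 | h3
  · apply hX; rw [eX, h3, zero_mul]
  · apply hY; rw [eY, h3, zero_mul]

end main

lemma zmod3_cases : ∀ a : ZMod 3, a ≠ 0 → a = 1 ∨ a = -1 := by decide

section code
variable {K : Type*} [Field K] [CharP K 3] [Algebra (ZMod 3) K]

lemma wt_three (hsq : ∀ a b : K, a ^ 2 + b ^ 2 = 0 → a = 0) (m h : ℕ) (hm3 : ¬ 3 ∣ m)
    (hK : ∀ x : K, x ^ 3 ^ m = x) (hS : SigmaCase K h) (X Y Z : K) (hX : X ≠ 0) (hY : Y ≠ 0)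
    (hZ : Z ≠ 0) (hXY : X ≠ Y) (hXZ : X ≠ Z) (hYZ : Y ≠ Z) (a b c : ZMod 3)
    (ha : a ≠ 0) (hb : b ≠ 0) (hc : c ≠ 0) (h1 : a • X + b • Y + c • Z = 0)
    (h2 : a • X ^ (3 ^ h + 13) + b • Y ^ (3 ^ h + 13) + c • Z ^ (3 ^ h + 13) = 0) : False := by
  have same := wt_same hsq m h hm3 hK hS
  have diff := wt_diff hsq m h hm3 hK hS
  rcases zmod3_cases a ha with rfl | rfl <;> rcases zmod3_cases b hb with rfl | rfl <;>
    rcases zmod3_cases c hc with rfl | rfl <;> simp only [one_smul, neg_smul] at h1 h2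
  · exact same X Y Z hXY h1 h2
  · exact diff X Y Z hX hY hZ hXY (by linear_combination h1) (by linear_combination h2)
  · exact diff X Z Y hX hZ hY hXZ (by linear_combination h1) (by linear_combination h2)
  · exact diff Y Z X hY hZ hX hYZ (by linear_combination -h1) (by linear_combination -h2)
  · exact diff Y Z X hY hZ hX hYZ (by linear_combination h1) (by linear_combination h2)
  · exact diff X Z Y hX hZ hY hXZ (by linear_combination -h1) (by linear_combination -h2)
  · exact diff X Y Z hX hY hZ hXY (by linear_combination -h1) (by linear_combination -h2)
  · exact same X Y Z hXY (by linear_combination -h1) (by linear_combination -h2)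

lemma wt_two (h : ℕ) (X Y : K) (hX : X ≠ 0) (hXY : X ≠ Y) (a b : ZMod 3)
    (ha : a ≠ 0) (hb : b ≠ 0) (h1 : a • X + b • Y = 0)
    (h2 : a • X ^ (3 ^ h + 13) + b • Y ^ (3 ^ h + 13) = 0) : False := by
  have key : X + Y = 0 → X ^ (3 ^ h + 13) + Y ^ (3 ^ h + 13) = 0 → False := by
    intro h1 h2
    have : Y = -X := by linear_combination h1
    rw [this, (e_even h).neg_pow] at h2
    apply pow_ne_zero (3 ^ h + 13) hX
    linear_combination -h2 + X ^ (3 ^ h + 13) * (three_zero (K := K))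
  rcases zmod3_cases a ha with rfl | rfl <;> rcases zmod3_cases b hb with rfl | rfl <;>
    simp only [one_smul, neg_smul] at h1 h2
  · exact key h1 h2
  · exact hXY (by linear_combination h1)
  · exact hXY (by linear_combination -h1)
  · exact key (by linear_combination -h1) (by linear_combination -h2)

/-- minimum weight, abstractly -/
lemma min_wt (hsq : ∀ a b : K, a ^ 2 + b ^ 2 = 0 → a = 0) (m h : ℕ) (hm3 : ¬ 3 ∣ m)
    (hK : ∀ x : K, x ^ 3 ^ m = x) (hS : SigmaCase K h) {n : ℕ} (f : Fin n → K)
    (hf : Function.Injective f) (hf0 : ∀ i, f i ≠ 0) (c : Fin n → ZMod 3) (hc : c ≠ 0)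
    (h1 : ∑ i, c i • f i = 0) (h2 : ∑ i, c i • f i ^ (3 ^ h + 13) = 0) : 4 ≤ hammingNorm c := by
  by_contra hlt
  have hsum : ∀ g : Fin n → K, ∑ i, c i • g i = ∑ i ∈ Finset.univ.filter (fun i => c i ≠ 0),
      c i • g i := by
    intro g
    rw [Finset.sum_filter_of_ne]
    intro i _ hi h0
    rw [h0, zero_smul] at hi
    exact hi rfl
  rw [hsum] at h1
  rw [hsum (fun i => f i ^ (3 ^ h + 13))] at h2
  have hmem : ∀ i, i ∈ Finset.univ.filter (fun i => c i ≠ 0) → c i ≠ 0 := by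
    intro i hi; simpa using hi
  have hcard : (Finset.univ.filter (fun i => c i ≠ 0)).card < 4 := not_le.1 hlt
  generalize hT : Finset.univ.filter (fun i => c i ≠ 0) = T at *
  have hT0 : T.card ≠ 0 := by
    intro h0
    rw [Finset.card_eq_zero] at h0
    apply hc
    ext1 i
    by_contra hi
    have : i ∈ T := by rw [← hT]; simpa using hi
    rw [h0] at this
    simp at this
  obtain h' | h' | h' : T.card = 1 ∨ T.card = 2 ∨ T.card = 3 := by omega
  · obtain ⟨i, rfl⟩ := Finset.card_eq_one.1 h'
    rw [Finset.sum_singleton] at h1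
    exact (smul_ne_zero (hmem i (by simp)) (hf0 i)) h1
  · obtain ⟨i, j, hij, rfl⟩ := Finset.card_eq_two.1 h'
    rw [Finset.sum_pair hij] at h1 h2
    exact wt_two h (f i) (f j) (hf0 i) (hf.ne hij) _ _ (hmem i (by simp)) (hmem j (by simp)) h1 h2
  · obtain ⟨i, j, k, hij, hik, hjk, rfl⟩ := Finset.card_eq_three.1 h'
    rw [Finset.sum_insert (by simp [hij, hik]), Finset.sum_pair hjk, ← add_assoc] at h1 h2
    exact wt_three hsq m h hm3 hK hS (f i) (f j) (f k) (hf0 i) (hf0 j) (hf0 k) (hf.ne hij)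
      (hf.ne hik) (hf.ne hjk) _ _ _ (hmem i (by simp)) (hmem j (by simp)) (hmem k (by simp)) h1 h2

lemma pair_inj {n : ℕ} (i j i' j' : Fin n) (hij : i < j) (hij' : i' < j') (a b a' b' : ZMod 3)
    (ha : a ≠ 0) (hb : b ≠ 0) (ha' : a' ≠ 0) (hb' : b' ≠ 0)
    (h : (Pi.single i a + Pi.single j b : Fin n → ZMod 3) = Pi.single i' a' + Pi.single j' b') :
    i = i' ∧ j = j' ∧ a = a' ∧ b = b' := by
  have h1 := congrFun h i
  have h2 := congrFun h j
  have h3 := congrFun h i'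
  have h4 := congrFun h j'
  simp only [Pi.add_apply, Pi.single_apply] at h1 h2 h3 h4
  have := hij.ne
  have := hij'.ne
  grind

/-- existence of a word of weight at most four in the kernel (sphere packing). -/
lemma exists_wt {V : Type*} [AddCommGroup V] [Module (ZMod 3) V] [Fintype V] (n : ℕ)
    (hn : 5 ≤ n) (hV : Fintype.card V = (n + 1) ^ 2)
    (L : (Fin n → ZMod 3) →ₗ[ZMod 3] V) :
    ∃ c, L c = 0 ∧ c ≠ 0 ∧ hammingNorm c ≤ 4 := by
  let T := (Σ j : Fin n, Fin (j : ℕ)) × (ZMod 3)ˣ × (ZMod 3)ˣ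
  let idx : T → Fin n := fun t => ⟨(t.1.2 : ℕ), t.1.2.2.trans t.1.1.2⟩
  let v : T → (Fin n → ZMod 3) := fun t =>
    Pi.single (idx t) (t.2.1 : ZMod 3) + Pi.single t.1.1 (t.2.2 : ZMod 3)
  have hvinj : Function.Injective v := by
    intro t t' htt
    obtain ⟨e1, e2, e3, e4⟩ := pair_inj (idx t) t.1.1 (idx t') t'.1.1 t.1.2.2 t'.1.2.2
      t.2.1 t.2.2 t'.2.1 t'.2.2 t.2.1.ne_zero t.2.2.ne_zero t'.2.1.ne_zero t'.2.2.ne_zero htt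
    obtain ⟨⟨j, i⟩, a, b⟩ := t
    obtain ⟨⟨j', i'⟩, a', b'⟩ := t'
    simp only at e2 e3 e4
    subst e2
    have e1' : i = i' := by
      apply Fin.ext
      have := congrArg Fin.val e1
      simpa [idx] using this
    rw [e1', Units.ext e3, Units.ext e4]
  have hcardT : Fintype.card V < Fintype.card T := by
    have hu : Fintype.card (ZMod 3)ˣ = 2 := by decide
    have h1 : Fintype.card (Σ j : Fin n, Fin (j : ℕ)) = ∑ i ∈ Finset.range n, i := by
      rw [Fintype.card_sigma]
      simp only [Fintype.card_fin]
      exact Fin.sum_univ_eq_sum_range (fun i => i) n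
    have h2 := Finset.sum_range_id_mul_two n
    have h3 : Fintype.card T = (∑ i ∈ Finset.range n, i) * 2 * 2 := by
      simp only [T, Fintype.card_prod, hu, h1]; ring
    rw [h3, h2, hV]
    obtain ⟨k, rfl⟩ := Nat.exists_eq_add_of_le hn
    rw [show 5 + k - 1 = 4 + k by omega]
    nlinarith
  obtain ⟨t, t', hne, heq⟩ := Fintype.exists_ne_map_eq_of_card_lt (fun t => L (v t)) hcardT
  refine ⟨v t - v t', by rw [map_sub, sub_eq_zero]; exact heq,
    sub_ne_zero.2 (hvinj.ne hne), ?_⟩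
  have hsub : (Finset.univ.filter (fun i => (v t - v t') i ≠ 0)) ⊆
      {idx t, t.1.1, idx t', t'.1.1} := by
    intro i hi
    simp only [Finset.mem_filter, Finset.mem_univ, true_and] at hi
    simp only [Finset.mem_insert, Finset.mem_singleton]
    by_contra hcon
    push Not at hcon
    obtain ⟨q1, q2, q3, q4⟩ := hcon
    apply hi
    simp [v, Pi.single_apply, q1, q2, q3, q4]
  exact (Finset.card_le_card hsub).trans Finset.card_le_four

end code

section surj
open Polynomial IntermediateField

lemma aeval_surj {K : Type*} [Field K] [Algebra (ZMod 3) K]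
    (hp : (Module.finrank (ZMod 3) K).Prime) (β : K) (hβ : β ^ 2 ≠ 1) (hβ0 : β ≠ 0) (a : K) :
    ∃ p : (ZMod 3)[X], aeval β p = a := by
  haveI : FiniteDimensional (ZMod 3) K := Module.finite_of_finrank_pos hp.pos
  haveI := IntermediateField.isSimpleOrder_of_finrank_prime (ZMod 3) K hp
  have h1 : (ZMod 3)⟮β⟯ ≠ ⊥ := by
    intro h
    rw [IntermediateField.adjoin_simple_eq_bot_iff, IntermediateField.mem_bot] at h
    obtain ⟨c, rfl⟩ := h
    have : ∀ c : ZMod 3, c ≠ 0 → c ^ 2 = 1 := by decide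
    apply hβ
    rw [← map_pow, this c (by rintro rfl; simp at hβ0), map_one]
  have h2 := (eq_bot_or_eq_top (ZMod 3)⟮β⟯).resolve_left h1
  have h3 : Algebra.adjoin (ZMod 3) {β} = ⊤ := by
    rw [← IntermediateField.adjoin_simple_toSubalgebra_of_isAlgebraic
      (Algebra.IsAlgebraic.isAlgebraic β), h2, IntermediateField.top_toSubalgebra]
  rw [Algebra.adjoin_singleton_eq_range_aeval] at h3
  have : a ∈ (aeval (R := ZMod 3) β).range := by rw [h3]; trivial
  exact this

lemma poly_surj {K : Type*} [Field K] [Algebra (ZMod 3) K] [Finite K]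
    (hp : (Module.finrank (ZMod 3) K).Prime) (β γ : K) (hβ : β ^ 2 ≠ 1) (hβ0 : β ≠ 0)
    (hγ : γ ^ 2 ≠ 1) (hγ0 : γ ≠ 0) (hβs : ¬ IsSquare β) (hγs : IsSquare γ) (a b : K) :
    ∃ p : (ZMod 3)[X], aeval β p = a ∧ aeval γ p = b := by
  haveI : FiniteDimensional (ZMod 3) K := Module.finite_of_finrank_pos hp.pos
  have hi : ∀ x : K, IsIntegral (ZMod 3) x := fun x => Algebra.IsIntegral.isIntegral x
  have hne : minpoly (ZMod 3) β ≠ minpoly (ZMod 3) γ := by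
    intro h
    rw [Normal.minpoly_eq_iff_mem_orbit] at h
    obtain ⟨σ, hσ⟩ := h
    apply hβs
    rw [← hσ]
    obtain ⟨r, hr⟩ := hγs
    exact ⟨σ r, by rw [← map_mul, ← hr]; rfl⟩
  have hcop : IsCoprime (minpoly (ZMod 3) β) (minpoly (ZMod 3) γ) := by
    rw [(minpoly.irreducible (hi β)).coprime_iff_not_dvd]
    intro hd
    exact hne (eq_of_monic_of_associated (minpoly.monic (hi β)) (minpoly.monic (hi γ))
      ((minpoly.irreducible (hi β)).associated_of_dvd (minpoly.irreducible (hi γ)) hd))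
  obtain ⟨u, w, huw⟩ := hcop
  obtain ⟨p, hp1⟩ := aeval_surj hp β hβ hβ0 a
  obtain ⟨q, hq1⟩ := aeval_surj hp γ hγ hγ0 b
  have e1 := congrArg (aeval β) huw
  have e2 := congrArg (aeval γ) huw
  simp only [map_add, map_mul, minpoly.aeval, mul_zero, zero_add, add_zero, map_one] at e1 e2
  refine ⟨p * (w * minpoly (ZMod 3) γ) + q * (u * minpoly (ZMod 3) β), ?_, ?_⟩
  · simp [e1, hp1, minpoly.aeval]
  · simp [e2, hq1, minpoly.aeval]

lemma vec_surj {K : Type*} [Field K] [Algebra (ZMod 3) K] [Finite K]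
    (hp : (Module.finrank (ZMod 3) K).Prime) (n : ℕ) (hn : n ≠ 0) (β γ : K)
    (hβ : β ^ 2 ≠ 1) (hβ0 : β ≠ 0)
    (hγ : γ ^ 2 ≠ 1) (hγ0 : γ ≠ 0) (hβs : ¬ IsSquare β) (hγs : IsSquare γ)
    (hβn : β ^ n = 1) (hγn : γ ^ n = 1) (a b : K) :
    ∃ c : Fin n → ZMod 3, ∑ i, c i • β ^ (i : ℕ) = a ∧ ∑ i, c i • γ ^ (i : ℕ) = b := by
  obtain ⟨p, h1, h2⟩ := poly_surj hp β γ hβ hβ0 hγ hγ0 hβs hγs a b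
  have hmon : (X ^ n - 1 : (ZMod 3)[X]).Monic := by
    simpa using monic_X_pow_sub_C (1 : ZMod 3) hn
  have hdeg : (p %ₘ (X ^ n - 1)).natDegree < n := by
    have hnd : (X ^ n - 1 : (ZMod 3)[X]).natDegree = n := by
      simpa using natDegree_X_pow_sub_C (n := n) (r := (1 : ZMod 3))
    have := natDegree_modByMonic_lt p hmon (by
      intro h; rw [h] at hnd; simp at hnd; exact hn hnd.symm)
    rwa [hnd] at this
  have key : ∀ x : K, x ^ n = 1 →
      ∑ i : Fin n, (p %ₘ (X ^ n - 1)).coeff i • x ^ (i : ℕ) = aeval x p := by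
    intro x hx
    rw [Fin.sum_univ_eq_sum_range (fun i => (p %ₘ (X ^ n - 1)).coeff i • x ^ i) n,
      ← aeval_eq_sum_range' hdeg]
    conv_rhs => rw [← modByMonic_add_div p (X ^ n - 1)]
    simp [hx]
  exact ⟨fun i => (p %ₘ (X ^ n - 1)).coeff i, by rw [key β hβn, h1], by rw [key γ hγn, h2]⟩

end surj

theorem stmt3 (m h : ℕ) (hm : Nat.Prime m) (hodd : Odd m)
    (hh1 : 3 ≤ h) (hh2 : h ≤ m - 1)
    (hcond : (5 ≤ m ∧ 2 * h ≡ 3 [MOD m]) ∨ (m % 3 = 2 ∧ h = (m + 1) / 3))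
    (α : (GaloisField 3 m)ˣ) (hα : ∀ u : (GaloisField 3 m)ˣ, u ∈ Subgroup.zpowers α) :
    Module.finrank (ZMod 3) (ternaryCyclicCode m (3 ^ h + 13) (α : GaloisField 3 m))
        = 3 ^ m - 1 - 2 * m ∧
      (∀ c ∈ ternaryCyclicCode m (3 ^ h + 13) (α : GaloisField 3 m),
        c ≠ 0 → 4 ≤ hammingNorm c) ∧
      (∃ c ∈ ternaryCyclicCode m (3 ^ h + 13) (α : GaloisField 3 m),
        c ≠ 0 ∧ hammingNorm c = 4) := by
  have hm4 : 4 ≤ m := by omega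
  have hm5 : 5 ≤ m := by
    obtain ⟨k, hk⟩ := hodd
    omega
  have hm3 : ¬ 3 ∣ m := by
    intro hd
    have := (Nat.prime_dvd_prime_iff_eq Nat.prime_three hm).1 hd
    omega
  have hm0 : m ≠ 0 := by omega
  have hcard : Nat.card (GaloisField 3 m) = 3 ^ m := GaloisField.card 3 m hm0
  haveI : Fintype (GaloisField 3 m) := Fintype.ofFinite _
  have hcard' : Fintype.card (GaloisField 3 m) = 3 ^ m := by
    rw [← Nat.card_eq_fintype_card, hcard]
  have hK : ∀ x : GaloisField 3 m, x ^ 3 ^ m = x := by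
    intro x
    rw [← hcard']
    exact FiniteField.pow_card x
  have hmod : 3 ^ m % 4 = 3 := by
    obtain ⟨k, hk⟩ := hodd
    rw [hk, pow_succ, pow_mul]
    norm_num [Nat.mul_mod, Nat.pow_mod]
  have hneg : ¬ IsSquare (-1 : GaloisField 3 m) := by
    rw [FiniteField.isSquare_neg_one_iff, hcard', hmod]
    simp
  have hsq : ∀ a b : GaloisField 3 m, a ^ 2 + b ^ 2 = 0 → a = 0 := by
    intro a b hab
    by_contra ha
    apply hneg
    refine ⟨b / a, ?_⟩
    field_simp
    linear_combination -hab
  have hKk : ∀ (k : ℕ) (x : GaloisField 3 m), x ^ 3 ^ (m * k) = x := by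
    intro k x
    induction k with
    | zero => simp
    | succ k ih => rw [mul_add, pow_add, pow_mul, ih, mul_one, hK]
  have hS : SigmaCase (GaloisField 3 m) h := by
    rcases hcond with ⟨_, hc⟩ | ⟨hc, hc'⟩
    · left
      intro x
      have hd := (Nat.modEq_iff_dvd' (by omega : 3 ≤ 2 * h)).1 hc.symm
      obtain ⟨k, hk⟩ := hd
      have e1 : h + h = m * k + 3 := by omega
      rw [← pow_mul, ← pow_add, e1, pow_add, pow_mul, hKk]
      norm_num
    · right
      intro x
      have e1 : h + (h + h) = m * 1 + 1 := by omega
      rw [← pow_mul, ← pow_mul, ← pow_add, ← pow_add, e1, pow_add, pow_mul, hKk]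
      norm_num
  have h3m : 243 ≤ 3 ^ m := by
    calc 243 = 3 ^ 5 := by norm_num
      _ ≤ 3 ^ m := Nat.pow_le_pow_right (by norm_num) hm5
  have hord : orderOf α = 3 ^ m - 1 := by
    rw [orderOf_eq_card_of_forall_mem_zpowers hα, Nat.card_units, hcard]
  have hpow1 : ∀ k : ℕ, (α : GaloisField 3 m) ^ k = 1 ↔ 3 ^ m - 1 ∣ k := by
    intro k
    rw [← hord, orderOf_dvd_iff_pow_eq_one, ← Units.val_pow_eq_pow_val, Units.val_eq_one]
  have h3h : 3 * 3 ^ h ≤ 3 ^ m := by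
    rw [← pow_succ']
    exact Nat.pow_le_pow_right (by norm_num) (by omega)
  have hβ : (α : GaloisField 3 m) ^ 2 ≠ 1 := by
    rw [Ne, hpow1]
    intro hd
    have := Nat.le_of_dvd (by norm_num) hd
    omega
  have hγ : ((α : GaloisField 3 m) ^ (3 ^ h + 13)) ^ 2 ≠ 1 := by
    rw [← pow_mul, Ne, hpow1]
    intro hd
    have := Nat.le_of_dvd (by positivity) hd
    omega
  have hβs : ¬ IsSquare (α : GaloisField 3 m) := by
    rintro ⟨r, hr⟩
    have hr0 : r ≠ 0 := by
      rintro rfl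
      exact α.ne_zero (by rw [hr, mul_zero])
    have e1 : r ^ (3 ^ m - 1) = 1 := by
      rw [← hcard']
      exact FiniteField.pow_card_sub_one_eq_one r hr0
    have e2 : (α : GaloisField 3 m) ^ ((3 ^ m - 1) / 2) = 1 := by
      rw [hr, ← pow_two, ← pow_mul, show 2 * ((3 ^ m - 1) / 2) = 3 ^ m - 1 by omega, e1]
    rw [hpow1] at e2
    have := Nat.le_of_dvd (by omega) e2
    omega
  have hγs : IsSquare ((α : GaloisField 3 m) ^ (3 ^ h + 13)) := (e_even h).isSquare_pow _
  have hβn : (α : GaloisField 3 m) ^ (3 ^ m - 1) = 1 := (hpow1 _).2 dvd_rfl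
  have hγn : ((α : GaloisField 3 m) ^ (3 ^ h + 13)) ^ (3 ^ m - 1) = 1 := by
    rw [← pow_mul, mul_comm, pow_mul, hβn, one_pow]
  have hfr : Module.finrank (ZMod 3) (GaloisField 3 m) = m := GaloisField.finrank 3 hm0
  let L := (parityMap m 1 (α : GaloisField 3 m)).prod
    (parityMap m (3 ^ h + 13) (α : GaloisField 3 m))
  have hker : LinearMap.ker L = ternaryCyclicCode m (3 ^ h + 13) (α : GaloisField 3 m) :=
    LinearMap.ker_prod _ _
  have hsurj : Function.Surjective L := by
    rintro ⟨a, b⟩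
    obtain ⟨c, hc1, hc2⟩ := vec_surj (hfr.symm ▸ hm) (3 ^ m - 1) (by omega)
      (α : GaloisField 3 m) _ hβ α.ne_zero hγ (pow_ne_zero _ α.ne_zero) hβs hγs hβn hγn a b
    refine ⟨c, Prod.ext ?_ ?_⟩
    · change ∑ i, c i • (α : GaloisField 3 m) ^ (1 * (i : ℕ)) = a
      simpa only [one_mul] using hc1
    · change ∑ i, c i • (α : GaloisField 3 m) ^ ((3 ^ h + 13) * (i : ℕ)) = b
      simpa only [pow_mul] using hc2
  have hfinj : Function.Injective
      (fun i : Fin (3 ^ m - 1) => (α : GaloisField 3 m) ^ (i : ℕ)) := by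
    intro i j hij
    have hij' : α ^ (i : ℕ) = α ^ (j : ℕ) := by
      apply Units.ext
      simpa using hij
    apply Fin.ext
    exact pow_injOn_Iio_orderOf (by rw [hord]; exact i.2) (by rw [hord]; exact j.2) hij'
  have hmin : ∀ c ∈ ternaryCyclicCode m (3 ^ h + 13) (α : GaloisField 3 m),
        c ≠ 0 → 4 ≤ hammingNorm c := by
    intro c hc hc0
    have hc1 : ∑ i, c i • (α : GaloisField 3 m) ^ (1 * (i : ℕ)) = 0 := hc.1
    have hc2 : ∑ i, c i • (α : GaloisField 3 m) ^ ((3 ^ h + 13) * (i : ℕ)) = 0 := hc.2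
    refine min_wt hsq m h hm3 hK hS _ hfinj (fun i => pow_ne_zero _ α.ne_zero) c hc0 ?_ ?_
    · simpa only [one_mul] using hc1
    · rw [← hc2]
      refine Finset.sum_congr rfl fun i _ => ?_
      rw [← pow_mul, mul_comm]
  refine ⟨?_, hmin, ?_⟩
  · have hrn := LinearMap.finrank_range_add_finrank_ker L
    rw [LinearMap.range_eq_top.2 hsurj, finrank_top, Module.finrank_prod, hfr, hker,
      Module.finrank_fin_fun] at hrn
    omega
  · obtain ⟨c, hc1, hc2, hc3⟩ := exists_wt (3 ^ m - 1) (by omega)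
      (by rw [Fintype.card_prod, hcard', show 3 ^ m - 1 + 1 = 3 ^ m by omega, sq]) L
    have hmem : c ∈ ternaryCyclicCode m (3 ^ h + 13) (α : GaloisField 3 m) := by
      rw [← hker]
      exact hc1
    exact ⟨c, hmem, hc2, le_antisymm hc3 (hmin c hmem hc2)⟩
end
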